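/- arXiv:2405.13253 — 2 statements merged into one kernel-verified Lean document; each statement's English description precedes it below -/
import Mathlib

section
/- Let u be a solution in Q_4 of u_t + div(A(x,t)∇u) + ⟨b(x,t),∇u⟩ + V(x,t)u = 0. Then there exists a constant N > 1, depending only on n, Λ and M, such that for every ρ ∈ (0,1] and every 0 < t ≤ T_{ρ,N}, where T_{ρ,N} = ρ² / (2N·log(2N(1+‖V‖_∞+‖b‖_∞²)²·Θ_ρ) + 5N²(‖V‖_∞^{1/2} + ‖b‖_∞ + 1)) and Θ_ρ = (∫_{Q_3} u² dX)/(ρ² ∫_{B_ρ} u(x,0)² dx), one has N·e^{‖V‖_∞^{1/2} + ‖b‖_∞} ∫_{B_{2ρ}} u(x,t)² dx ≥ ∫_{B_ρ} u(x,0)² dx. -/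
open MeasureTheory Metric Set Real

noncomputable section

/-- `ℝⁿ` as a Euclidean space. -/
abbrev En (n : ℕ) : Type := EuclideanSpace ℝ (Fin n)

/-- The `i`-th spatial partial derivative of a scalar function. -/
def pder {n : ℕ} (i : Fin n) (f : En n → ℝ) (x : En n) : ℝ :=
  fderiv ℝ f x (EuclideanSpace.single i 1)

/-- The (backward) parabolic operator `L u = u_t + div(A∇u) + ⟨b,∇u⟩ + V u`. -/
def Lop {n : ℕ} (A : En n → ℝ → Matrix (Fin n) (Fin n) ℝ)
    (b : En n → ℝ → En n) (V : En n → ℝ → ℝ) (u : En n → ℝ → ℝ)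
    (x : En n) (t : ℝ) : ℝ :=
  deriv (fun s => u x s) t
    + (∑ i, pder i (fun y => ∑ j, A y t i j * pder j (fun z => u z t) y) x)
    + (∑ i, b x t i * pder i (fun z => u z t) x)
    + V x t * u x t

/-- `A` is symmetric and uniformly elliptic with constant `Λ`:
`Λ⁻¹|ξ|² ≤ ⟨A(x,t)ξ,ξ⟩ ≤ Λ|ξ|²`. -/
def Elliptic {n : ℕ} (A : En n → ℝ → Matrix (Fin n) (Fin n) ℝ) (Λ : ℝ) : Prop :=
  ∀ (x : En n) (t : ℝ), 0 ≤ t → (A x t).IsSymm ∧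
    ∀ ξ : En n,
      Λ⁻¹ * ‖ξ‖ ^ 2 ≤ ∑ i, ∑ j, A x t i j * ξ j * ξ i ∧
        ∑ i, ∑ j, A x t i j * ξ j * ξ i ≤ Λ * ‖ξ‖ ^ 2

/-- `A` is Lipschitz in the parabolic sense with constant `M`:
`|a_{ij}(x,t) − a_{ij}(y,s)| ≤ M(|x−y| + |t−s|^{1/2})`. -/
def ParLipschitz {n : ℕ} (A : En n → ℝ → Matrix (Fin n) (Fin n) ℝ) (M : ℝ) : Prop :=
  ∀ (x y : En n) (s t : ℝ), 0 ≤ s → 0 ≤ t → ∀ i j,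
    |A x t i j - A y s i j| ≤ M * (‖x - y‖ + Real.sqrt |t - s|)

/-- The parabolic cylinder `Q_r = B_r × [0, r²]` as a subset of `ℝⁿ × ℝ`. -/
def Qcyl (n : ℕ) (r : ℝ) : Set (En n × ℝ) := ball (0 : En n) r ×ˢ Icc (0 : ℝ) (r ^ 2)

/-- `c` is a bound for the norm `‖f‖_{1,1/2}` on `Q₄`, i.e. it bounds `f`, its
spatial gradient, and its Hölder-`1/2` quotient in time. -/
def HolBound {n : ℕ} (f : En n → ℝ → ℝ) (c : ℝ) : Prop :=
  (∀ x ∈ ball (0 : En n) 4, ∀ t ∈ Icc (0 : ℝ) 16, |f x t| ≤ c) ∧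
  (∀ x ∈ ball (0 : En n) 4, ∀ t ∈ Icc (0 : ℝ) 16, ‖fderiv ℝ (fun y => f y t) x‖ ≤ c) ∧
  (∀ x ∈ ball (0 : En n) 4, ∀ t ∈ Icc (0 : ℝ) 16, ∀ s ∈ Icc (0 : ℝ) 16,
    |f x t - f x s| ≤ c * Real.sqrt |t - s|)

/-- `c` is a bound for `‖b‖_{1,1/2} = max_i ‖b_i‖_{1,1/2}` on `Q₄`. -/
def HolBoundVec {n : ℕ} (b : En n → ℝ → En n) (c : ℝ) : Prop :=
  ∀ i : Fin n, HolBound (fun x t => b x t i) c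
/-- `c` bounds `‖f‖_{L∞(Q₄)}`. -/
def SupBound {n : ℕ} (f : En n → ℝ → ℝ) (c : ℝ) : Prop :=
  ∀ x ∈ ball (0 : En n) 4, ∀ t ∈ Icc (0 : ℝ) 16, |f x t| ≤ c

/-- `c` bounds `‖b‖_{L∞(Q₄)}`. -/
def SupBoundVec {n : ℕ} (b : En n → ℝ → En n) (c : ℝ) : Prop :=
  ∀ x ∈ ball (0 : En n) 4, ∀ t ∈ Icc (0 : ℝ) 16, ‖b x t‖ ≤ c



lemma aux_pder_contDiffOn {n : ℕ} {U : En n → ℝ} (hU : ContDiffOn ℝ 2 U (ball 0 4)) (j : Fin n) :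
    ContDiffOn ℝ 1 (fun y => pder j U y) (ball 0 4) := by
  have h := hU.fderiv_of_isOpen (m := 1) isOpen_ball (by norm_num)
  exact h.clm_apply contDiffOn_const

lemma aux_lip_of_contDiffOn {n : ℕ} {f : En n → ℝ} (hf : ContDiffOn ℝ 1 f (ball 0 4)) :
    ∃ K : ℝ, 0 ≤ K ∧ (∀ x ∈ ball (0 : En n) 3, |f x| ≤ K) ∧
      ∀ x ∈ ball (0 : En n) 3, ∀ y ∈ ball (0 : En n) 3, |f x - f y| ≤ K * ‖x - y‖ := by
  have hsub : closedBall (0 : En n) 3 ⊆ ball 0 4 := closedBall_subset_ball (by norm_num)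
  have hsub' : ball (0 : En n) 3 ⊆ closedBall 0 3 := ball_subset_closedBall
  have hc : IsCompact (closedBall (0 : En n) 3) := isCompact_closedBall _ _
  obtain ⟨K1, hK1⟩ := hc.exists_bound_of_continuousOn (hf.continuousOn.mono hsub)
  have h := hf.fderiv_of_isOpen (m := 0) isOpen_ball (by norm_num)
  obtain ⟨K2, hK2⟩ := hc.exists_bound_of_continuousOn (h.continuousOn.mono hsub)
  refine ⟨max (max K1 K2) 0, le_max_right _ _, fun x hx => ?_, fun x hx y hy => ?_⟩
  · exact (hK1 x (hsub' hx)).trans ((le_max_left _ _).trans (le_max_left _ _))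
  · have := (convex_ball (0 : En n) 3).norm_image_sub_le_of_norm_fderiv_le (𝕜 := ℝ) (f := f)
      (C := max (max K1 K2) 0) (fun z hz => ?_) (fun z hz => ?_) hy hx
    · exact this
    · exact (hf.differentiableOn (by norm_num)).differentiableAt
        (isOpen_ball.mem_nhds (hsub (hsub' hz)))
    · exact (hK2 z (hsub' hz)).trans ((le_max_right _ _).trans (le_max_left _ _))

lemma aux_flux_lip {n : ℕ} {U : En n → ℝ} (hU : ContDiffOn ℝ 2 U (ball 0 4))
    {a : En n → Matrix (Fin n) (Fin n) ℝ} {M : ℝ} (hM : 0 ≤ M)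
    (ha : ∀ x y i j, |a x i j - a y i j| ≤ M * ‖x - y‖) (i : Fin n) :
    ∃ (K : NNReal) (f : En n → ℝ), LipschitzWith K f ∧
      EqOn (fun y => ∑ j, a y i j * pder j U y) f (ball 0 3) := by
  have hj : ∀ j, ∃ K : ℝ, 0 ≤ K ∧ ∀ x ∈ ball (0 : En n) 3, ∀ y ∈ ball (0 : En n) 3,
      |a x i j * pder j U x - a y i j * pder j U y| ≤ K * ‖x - y‖ := by
    intro j
    obtain ⟨K, hK0, hK1, hK2⟩ := aux_lip_of_contDiffOn (aux_pder_contDiffOn hU j)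
    refine ⟨(|a 0 i j| + M * 3) * K + M * K, by positivity, fun x hx y hy => ?_⟩
    have h1 : |a x i j| ≤ |a 0 i j| + M * 3 := by
      have h2 := ha x 0 i j
      have h3 : ‖x - 0‖ ≤ 3 := by simpa using (mem_ball_zero_iff.1 hx).le
      have h4 : |a x i j| ≤ |a x i j - a 0 i j| + |a 0 i j| := by
        simpa using abs_add_le (a x i j - a 0 i j) (a 0 i j)
      nlinarith [mul_le_mul_of_nonneg_left h3 hM]
    have e : a x i j * pder j U x - a y i j * pder j U y
        = a x i j * (pder j U x - pder j U y) + (a x i j - a y i j) * pder j U y := by ring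
    rw [e]
    refine (abs_add_le _ _).trans ?_
    rw [abs_mul, abs_mul]
    have e1 := mul_le_mul h1 (hK2 x hx y hy) (abs_nonneg _) (by positivity)
    have e2 := mul_le_mul (ha x y i j) (hK1 y hy) (abs_nonneg _) (by positivity)
    nlinarith
  choose K hK0 hK using hj
  have hlip : LipschitzOnWith (Real.toNNReal (∑ j, K j))
      (fun y => ∑ j, a y i j * pder j U y) (ball 0 3) := by
    refine LipschitzOnWith.of_dist_le_mul fun x hx y hy => ?_
    rw [Real.coe_toNNReal _ (Finset.sum_nonneg fun j _ => hK0 j), Real.dist_eq, dist_eq_norm,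
      ← Finset.sum_sub_distrib, Finset.sum_mul]
    exact (Finset.abs_sum_le_sum_abs _ _).trans (Finset.sum_le_sum fun j _ => hK j x hx y hy)
  obtain ⟨f, hf, hfe⟩ := hlip.extend_real
  exact ⟨_, f, hf, hfe⟩

lemma aux_ibp {n : ℕ} {U : En n → ℝ} (hU : ContDiffOn ℝ 2 U (ball 0 4))
    {a : En n → Matrix (Fin n) (Fin n) ℝ} {M : ℝ} (hM : 0 ≤ M)
    (ha : ∀ x y i j, |a x i j - a y i j| ≤ M * ‖x - y‖)
    {G : En n → ℝ} (hG : ContDiff ℝ 1 G) (hG0 : ∀ x, 2 ≤ ‖x‖ → G x = 0) :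
    Integrable (fun x => (∑ i, pder i (fun y => ∑ j, a y i j * pder j U y) x) * G x
      + ∑ i, (∑ j, a x i j * pder j U x) * pder i G x) ∧
    ∫ x, ((∑ i, pder i (fun y => ∑ j, a y i j * pder j U y) x) * G x
      + ∑ i, (∑ j, a x i j * pder j U x) * pder i G x) = 0 := by
  have hGs : tsupport G ⊆ closedBall 0 2 := by
    refine closure_minimal (fun x hx => ?_) isClosed_closedBall
    by_contra h
    exact hx (hG0 x (by simpa using (not_le.1 (mt mem_closedBall_zero_iff.2 h)).le))
  have hGc : HasCompactSupport G := (isCompact_closedBall (0 : En n) 2).of_isClosed_subset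
    (isClosed_tsupport _) hGs
  obtain ⟨D, hD⟩ := ContDiff.lipschitzWith_of_hasCompactSupport hGc hG (by norm_num)
  have key : ∀ i : Fin n,
      Integrable (fun x => pder i (fun y => ∑ j, a y i j * pder j U y) x * G x
        + (∑ j, a x i j * pder j U x) * pder i G x) ∧
      ∫ x, (pder i (fun y => ∑ j, a y i j * pder j U y) x * G x
        + (∑ j, a x i j * pder j U x) * pder i G x) = 0 := by
    intro i
    obtain ⟨K, f, hf, hfe⟩ := aux_flux_lip hU hM ha i
    set v : En n := EuclideanSpace.single i 1 with hv
    have hae : (fun x => pder i (fun y => ∑ j, a y i j * pder j U y) x * G x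
        + (∑ j, a x i j * pder j U x) * pder i G x) =ᵐ[volume]
        (fun x => lineDeriv ℝ f x v * G x + f x * pder i G x) := by
      filter_upwards [hf.ae_differentiableAt (μ := volume)] with x hx
      by_cases hx3 : x ∈ ball (0 : En n) 3
      · have h1 : (fun y => ∑ j, a y i j * pder j U y) =ᶠ[nhds x] f :=
          Filter.eventuallyEq_of_mem (isOpen_ball.mem_nhds hx3) hfe
        have h2 : pder i (fun y => ∑ j, a y i j * pder j U y) x = lineDeriv ℝ f x v := by
          rw [hx.lineDeriv_eq_fderiv, pder, h1.fderiv_eq]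
        rw [h2, show (∑ j, a x i j * pder j U x) = f x from hfe hx3]
      · have hx' : x ∉ tsupport G := fun h => hx3 (by
          have := mem_closedBall_zero_iff.1 (hGs h)
          exact mem_ball_zero_iff.2 (by linarith))
        have h1 : G x = 0 := image_eq_zero_of_notMem_tsupport hx'
        have h2 : pder i G x = 0 := by
          rw [pder, fderiv_of_notMem_tsupport (𝕜 := ℝ) hx']; rfl
        rw [h1, h2]; simp
    have hI1 : Integrable (fun x => lineDeriv ℝ f x v * G x) := by
      refine Integrable.bdd_mul (c := K * ‖v‖) (hG.continuous.integrable_of_hasCompactSupport hGc)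
        (hf.memLp_lineDeriv v).1 (.of_forall fun x => norm_lineDeriv_le_of_lipschitz ℝ hf)
    have hcd : Continuous (fun x => pder i G x) :=
      (hG.continuous_fderiv (by norm_num)).clm_apply continuous_const
    have hI2 : Integrable (fun x => f x * pder i G x) := by
      refine (hf.continuous.mul hcd).integrable_of_hasCompactSupport ?_
      refine HasCompactSupport.mul_left ?_
      exact (hGc.fderiv ℝ).comp_left (g := fun L : En n →L[ℝ] ℝ => L v) (by simp)
    refine ⟨(hI1.add hI2).congr hae.symm, ?_⟩
    rw [integral_congr_ae hae, integral_add hI1 hI2, hf.integral_lineDeriv_mul_eq hD hGc v,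
      ← integral_add]
    · rw [← integral_zero (En n) ℝ]
      refine integral_congr_ae (.of_forall fun x => ?_)
      simp only
      rw [((hG.differentiable (by norm_num)) x).lineDeriv_eq_fderiv, pder, map_neg]
      ring
    · refine hI2.neg.congr (.of_forall fun x => ?_)
      simp only [Pi.neg_apply]
      rw [((hG.differentiable (by norm_num)) x).lineDeriv_eq_fderiv, pder, map_neg]
      ring
    · exact hI2
  have e : (fun x => (∑ i, pder i (fun y => ∑ j, a y i j * pder j U y) x) * G x
      + ∑ i, (∑ j, a x i j * pder j U x) * pder i G x) = fun x => ∑ i,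
      (pder i (fun y => ∑ j, a y i j * pder j U y) x * G x
        + (∑ j, a x i j * pder j U x) * pder i G x) := by
    funext x
    rw [Finset.sum_add_distrib, Finset.sum_mul]
  rw [e]
  refine ⟨integrable_finsetSum _ fun i _ => (key i).1, ?_⟩
  rw [integral_finsetSum _ fun i _ => (key i).1]
  exact Finset.sum_eq_zero fun i _ => (key i).2

/-- algebraic pointwise inequality -/
lemma aux_pointwise {n : ℕ} {a : Matrix (Fin n) (Fin n) ℝ} {Λ : ℝ} (hΛ : 1 ≤ Λ)
    (hs : a.IsSymm)
    (hell : ∀ ξ : En n, Λ⁻¹ * ‖ξ‖ ^ 2 ≤ ∑ i, ∑ j, a i j * ξ j * ξ i ∧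
        ∑ i, ∑ j, a i j * ξ j * ξ i ≤ Λ * ‖ξ‖ ^ 2)
    (p q b : En n) {V sV sb u us g gs dv R : ℝ} (hV : |V| ≤ sV) (hb : ‖b‖ ≤ sb)
    (heq : us + dv + (∑ i, b i * p i) + V * u = 0)
    (hR : -R ≤ 2 * g * gs - 4 * Λ * ∑ i, q i ^ 2) :
    -(Λ * sb ^ 2 + 2 * sV) * (u * g) ^ 2 - R * u ^ 2 ≤
      2 * (u * g) * (us * g + u * gs) + 2 * (dv * (u * g ^ 2)
        + ∑ i, (∑ j, a i j * p j) * (p i * g ^ 2 + 2 * u * g * q i)) := by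
  set P := ∑ i, ∑ j, a i j * p j * p i with hP
  set C := ∑ i, ∑ j, a i j * p j * q i with hC
  set Qq := ∑ i, ∑ j, a i j * q j * q i with hQ
  have hC' : ∑ i, ∑ j, a i j * q j * p i = C := by
    rw [Finset.sum_comm, hC]
    refine Finset.sum_congr rfl fun i _ => Finset.sum_congr rfl fun j _ => ?_
    rw [← hs.apply j i]; ring
  have e1 : ∑ i, (∑ j, a i j * p j) * (p i * g ^ 2 + 2 * u * g * q i)
      = g ^ 2 * P + 2 * u * g * C := by
    rw [hP, hC, Finset.mul_sum, Finset.mul_sum, ← Finset.sum_add_distrib]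
    refine Finset.sum_congr rfl fun i _ => ?_
    rw [Finset.sum_mul, Finset.mul_sum, Finset.mul_sum, ← Finset.sum_add_distrib]
    refine Finset.sum_congr rfl fun j _ => ?_
    ring
  have hΛ0 : 0 < Λ := by linarith
  have hPlow := (hell p).1
  have hQup := (hell q).2
  have hsq : ∀ ξ : En n, ‖ξ‖ ^ 2 = ∑ i, ξ i ^ 2 := fun ξ => by
    rw [EuclideanSpace.norm_sq_eq]; simp
  have hcs : 0 ≤ g ^ 2 * P + 4 * (u * g) * C + 4 * u ^ 2 * Qq := by
    have h := (hell (g • p + (2 * u) • q)).1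
    have h0 : 0 ≤ Λ⁻¹ * ‖g • p + (2 * u) • q‖ ^ 2 := by positivity
    have e : ∑ i, ∑ j, a i j * (g • p + (2 * u) • q) j * (g • p + (2 * u) • q) i
        = g ^ 2 * P + 2 * (u * g) * C + 2 * (u * g) * (∑ i, ∑ j, a i j * q j * p i)
          + 4 * u ^ 2 * Qq := by
      rw [hP, hC, hQ]
      simp only [Finset.mul_sum, ← Finset.sum_add_distrib]
      refine Finset.sum_congr rfl fun i _ => Finset.sum_congr rfl fun j _ => ?_
      simp only [PiLp.add_apply, PiLp.smul_apply, smul_eq_mul]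
      ring
    rw [hC'] at e
    linarith
  have hbp : |∑ i, b i * p i| ≤ sb * ‖p‖ := by
    have h := abs_real_inner_le_norm b p
    have e : inner ℝ b p = ∑ i, b i * p i := by
      rw [PiLp.inner_apply]
      refine Finset.sum_congr rfl fun i _ => ?_
      simp [mul_comm]
    rw [e] at h
    exact h.trans (mul_le_mul_of_nonneg_right hb (norm_nonneg _))
  set B := ∑ i, b i * p i with hB
  have hf : -(2 * u * g ^ 2 * (us + dv)) ≤ 
      g ^ 2 * (Λ⁻¹ * ‖p‖ ^ 2 + Λ * sb ^ 2 * u ^ 2 + 2 * sV * u ^ 2) := by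
    have h1 : us + dv = -(B + V * u) := by linarith
    have h2 : 2 * u * B ≤ Λ⁻¹ * ‖p‖ ^ 2 + Λ * sb ^ 2 * u ^ 2 := by
      have h3 : u * B ≤ |u| * (sb * ‖p‖) := by
        refine (le_abs_self _).trans ?_
        rw [abs_mul]
        exact mul_le_mul_of_nonneg_left hbp (abs_nonneg _)
      have h4 : Λ⁻¹ * ‖p‖ ^ 2 + Λ * sb ^ 2 * u ^ 2 - 2 * (|u| * (sb * ‖p‖))
          = Λ⁻¹ * (‖p‖ - Λ * sb * |u|) ^ 2 := by
        rw [← sq_abs u]; field_simp; ring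
      have h5 : 0 ≤ Λ⁻¹ * (‖p‖ - Λ * sb * |u|) ^ 2 := by positivity
      linarith
    have h6 : V * u ^ 2 ≤ sV * u ^ 2 :=
      mul_le_mul_of_nonneg_right ((le_abs_self _).trans hV) (sq_nonneg _)
    rw [h1]
    have := mul_le_mul_of_nonneg_left (add_le_add h2 (mul_le_mul_of_nonneg_left h6 (zero_le_two)))
      (sq_nonneg g)
    nlinarith
  rw [e1]
  have hq1 : 4 * u ^ 2 * Qq ≤ 4 * u ^ 2 * (Λ * ‖q‖ ^ 2) :=
    mul_le_mul_of_nonneg_left hQup (by positivity)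
  have hp1 : g ^ 2 * (Λ⁻¹ * ‖p‖ ^ 2) ≤ g ^ 2 * P :=
    mul_le_mul_of_nonneg_left hPlow (by positivity)
  rw [← hsq] at hR
  have hR' := mul_le_mul_of_nonneg_left hR (sq_nonneg u)
  nlinarith


lemma aux_contDiffAt_mul {n : ℕ} {f g : En n → ℝ → ℝ} {τ : ℝ}
    (hf : ContDiffOn ℝ 2 (Function.uncurry f) (Qcyl n 4))
    (hg : ContDiffOn ℝ 2 (Function.uncurry g) (univ ×ˢ Ioi (-τ))) (hτ : 0 < τ)
    (hg0 : ∀ x s, 3 ≤ ‖x‖ → g x s = 0) (x : En n) {s : ℝ} (hs : s ∈ Ioo (0 : ℝ) 16) :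
    ContDiffAt ℝ 2 (Function.uncurry fun y r => f y r * g y r) (x, s) := by
  by_cases hx : x ∈ ball (0 : En n) 4
  · have h1 : Qcyl n 4 ∈ nhds (x, s) := by
      refine prod_mem_nhds (isOpen_ball.mem_nhds hx) (Icc_mem_nhds hs.1 ?_)
      norm_num; exact hs.2
    have h2 : (univ ×ˢ Ioi (-τ) : Set (En n × ℝ)) ∈ nhds (x, s) :=
      prod_mem_nhds Filter.univ_mem (Ioi_mem_nhds (by linarith [hs.1]))
    exact (hf.contDiffAt h1).mul (hg.contDiffAt h2)
  · have hx4 : 4 ≤ ‖x‖ := by simpa using hx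
    have : (Function.uncurry fun y r => f y r * g y r) =ᶠ[nhds (x, s)] fun _ => (0 : ℝ) := by
      have h3 : {p : En n × ℝ | 3 < ‖p.1‖} ∈ nhds (x, s) :=
        (isOpen_lt continuous_const continuous_fst.norm).mem_nhds (by simp; linarith)
      filter_upwards [h3] with p hp
      simp [Function.uncurry, hg0 p.1 p.2 (le_of_lt hp)]
    exact contDiffAt_const.congr_of_eventuallyEq this

lemma aux_continuousOn_mul {n : ℕ} {f g : En n → ℝ → ℝ} {τ : ℝ}
    (hf : ContinuousOn (Function.uncurry f) (Qcyl n 4))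
    (hg : ContinuousOn (Function.uncurry g) (univ ×ˢ Ioi (-τ))) (hτ : 0 < τ)
    (hg0 : ∀ x s, 3 ≤ ‖x‖ → g x s = 0) :
    ContinuousOn (Function.uncurry fun y r => f y r * g y r) (univ ×ˢ Icc (0 : ℝ) 16) := by
  rintro ⟨x, s⟩ ⟨-, hs⟩
  simp only at hs
  by_cases hx : x ∈ ball (0 : En n) 4
  · have h1 : (univ ×ˢ Icc (0 : ℝ) 16 : Set (En n × ℝ)) ∩ (ball (0 : En n) 4 ×ˢ univ) ⊆
        Qcyl n 4 := by
      rintro ⟨y, r⟩ ⟨⟨-, h⟩, ⟨h', -⟩⟩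
      refine ⟨h', ?_⟩
      norm_num at h ⊢; exact h
    have h2 : (ball (0 : En n) 4 ×ˢ univ : Set (En n × ℝ)) ∈ nhds (x, s) :=
      prod_mem_nhds (isOpen_ball.mem_nhds hx) Filter.univ_mem
    have h3 : (univ ×ˢ Ioi (-τ) : Set (En n × ℝ)) ∈ nhds (x, s) :=
      prod_mem_nhds Filter.univ_mem (Ioi_mem_nhds (by linarith [hs.1]))
    rw [← continuousWithinAt_inter h2]
    exact ((hf (x, s) (h1 ⟨⟨trivial, hs⟩, ⟨hx, trivial⟩⟩)).mono h1).mul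
      (hg.continuousAt h3).continuousWithinAt
  · have hx4 : 4 ≤ ‖x‖ := by simpa using hx
    have : (Function.uncurry fun y r => f y r * g y r) =ᶠ[nhds (x, s)] fun _ => (0 : ℝ) := by
      have h3 : {p : En n × ℝ | 3 < ‖p.1‖} ∈ nhds (x, s) :=
        (isOpen_lt continuous_const continuous_fst.norm).mem_nhds (by simp; linarith)
      filter_upwards [h3] with p hp
      simp [Function.uncurry, hg0 p.1 p.2 (le_of_lt hp)]
    exact (continuousAt_const.congr this.symm).continuousWithinAt

/-- continuity of the parametric integral -/
lemma aux_integral_continuousOn {n : ℕ} {v : En n → ℝ → ℝ}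
    (hv : ContinuousOn (Function.uncurry v) (univ ×ˢ Icc (0 : ℝ) 16))
    (hv0 : ∀ x s, 3 ≤ ‖x‖ → v x s = 0) :
    ContinuousOn (fun s => ∫ x, v x s) (Icc (0 : ℝ) 16) := by
  refine continuousOn_integral_of_compact_support (f := fun s x => v x s)
    (isCompact_closedBall (0 : En n) 3) ?_ ?_
  · have : Function.uncurry (fun (s : ℝ) (x : En n) => v x s)
        = Function.uncurry v ∘ Prod.swap := by
      funext p; rfl
    rw [this]
    refine hv.comp continuous_swap.continuousOn ?_
    rintro ⟨s, x⟩ ⟨h, -⟩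
    exact ⟨trivial, h⟩
  · intro s x _ hx
    refine hv0 x s ?_
    have := not_le.1 (mt mem_closedBall_zero_iff.2 hx)
    exact this.le

lemma aux_slice_integrable {n : ℕ} {v : En n → ℝ → ℝ}
    (hv : ContinuousOn (Function.uncurry v) (univ ×ˢ Icc (0 : ℝ) 16))
    (hv0 : ∀ x s, 3 ≤ ‖x‖ → v x s = 0) {s : ℝ} (hs : s ∈ Icc (0 : ℝ) 16) :
    Integrable (fun x => v x s) := by
  have hc : Continuous fun x => v x s := by
    rw [← continuousOn_univ]
    exact hv.comp (f := fun x : En n => (x, s)) (by fun_prop) (fun x _ => ⟨trivial, hs⟩)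
  refine hc.integrable_of_hasCompactSupport
    (HasCompactSupport.intro (isCompact_closedBall (0 : En n) 3) fun x hx => hv0 x s ?_)
  have := not_le.1 (mt mem_closedBall_zero_iff.2 hx)
  exact this.le

/-- differentiation under the integral sign -/
lemma aux_hasDerivAt_integral {n : ℕ} {v : En n → ℝ → ℝ}
    (hv : ∀ x, ∀ s ∈ Ioo (0 : ℝ) 16, ContDiffAt ℝ 1 (Function.uncurry v) (x, s))
    (hvc : ContinuousOn (Function.uncurry v) (univ ×ˢ Icc (0 : ℝ) 16))
    (hv0 : ∀ x s, 3 ≤ ‖x‖ → v x s = 0) {s : ℝ} (hs : s ∈ Ioo (0 : ℝ) 16) :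
    Integrable (fun x => deriv (fun r => v x r) s) ∧
    HasDerivAt (fun r => ∫ x, v x r) (∫ x, deriv (fun r => v x r) s) s := by
  have hd : ∀ x, ∀ r ∈ Ioo (0 : ℝ) 16, HasDerivAt (fun r => v x r)
      (fderiv ℝ (Function.uncurry v) (x, r) (0, 1)) r := by
    intro x r hr
    have h1 := ((hv x r hr).differentiableAt (by norm_num)).hasFDerivAt
    have h2 : HasDerivAt (fun r : ℝ => (x, r)) ((0 : En n), (1 : ℝ)) r :=
      (hasDerivAt_const r x).prodMk (hasDerivAt_id r)
    exact h1.comp_hasDerivAt r h2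
  have hcont : ContinuousOn (fun p : En n × ℝ => fderiv ℝ (Function.uncurry v) p (0, 1))
      (univ ×ˢ Ioo (0 : ℝ) 16) := by
    rintro ⟨x, r⟩ ⟨-, hr⟩
    have h := ((hv x r hr).fderiv_right (m := 0) (by norm_num)).continuousAt
    exact (h.clm_apply continuousAt_const).continuousWithinAt
  obtain ⟨s1, hs1, hs1'⟩ := exists_between hs.1
  obtain ⟨s2, hs2, hs2'⟩ := exists_between hs.2
  have hsub : Icc s1 s2 ⊆ Ioo (0 : ℝ) 16 := fun r hr =>
    ⟨hs1.trans_le hr.1, hr.2.trans_lt hs2'⟩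
  obtain ⟨C, hC⟩ := ((isCompact_closedBall (0 : En n) 3).prod
    (isCompact_Icc (a := s1) (b := s2))).exists_bound_of_continuousOn
      (hcont.mono (prod_mono (subset_univ _) hsub))
  have hIcc : Ioo (0 : ℝ) 16 ⊆ Icc 0 16 := Ioo_subset_Icc_self
  refine hasDerivAt_integral_of_dominated_loc_of_deriv_le
    (F := fun r x => v x r) (F' := fun r x => deriv (fun r => v x r) r) (s := Icc s1 s2)
    (bound := (closedBall (0 : En n) 3).indicator fun _ => C)
    (Icc_mem_nhds hs1' hs2) ?_ ?_ ?_ ?_ ?_ ?_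
  · filter_upwards [Ioo_mem_nhds hs.1 hs.2] with r hr
    exact (aux_slice_integrable hvc hv0 (hIcc hr)).aestronglyMeasurable
  · exact aux_slice_integrable hvc hv0 (hIcc hs)
  · have : (fun x => deriv (fun r => v x r) s) = fun x =>
        fderiv ℝ (Function.uncurry v) (x, s) (0, 1) := by
      funext x; exact (hd x s hs).deriv
    rw [this]
    refine Continuous.aestronglyMeasurable ?_
    rw [← continuousOn_univ]
    exact hcont.comp (f := fun x : En n => (x, s)) (by fun_prop) (fun x _ => ⟨trivial, hs⟩)
  · refine .of_forall fun x r hr => ?_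
    by_cases hx : x ∈ closedBall (0 : En n) 3
    · rw [indicator_of_mem hx, (hd x r (hsub hr)).deriv]
      exact hC (x, r) ⟨hx, hr⟩
    · rw [indicator_of_notMem hx]
      have h3 := (not_le.1 (mt mem_closedBall_zero_iff.2 hx)).le
      have : (fun r => v x r) = fun _ => 0 := by funext r; exact hv0 x r h3
      rw [this]; simp
  · rw [integrable_indicator_iff measurableSet_closedBall]
    exact integrableOn_const (measure_closedBall_lt_top.ne)
  · refine .of_forall fun x r hr => ?_
    exact (hd x r (hsub hr)).differentiableAt.hasDerivAt

lemma aux_energy {n : ℕ} {Λ M : ℝ} (hΛ : 1 ≤ Λ) (hM : 0 ≤ M)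
    {A : En n → ℝ → Matrix (Fin n) (Fin n) ℝ} {b : En n → ℝ → En n}
    {V : En n → ℝ → ℝ} {u : En n → ℝ → ℝ} {sV sb : ℝ}
    (hell : Elliptic A Λ) (hlip : ParLipschitz A M) (hV : SupBound V sV) (hb : SupBoundVec b sb)
    (hu : ContDiffOn ℝ 2 (Function.uncurry u) (Qcyl n 4))
    (heq : ∀ x ∈ ball (0 : En n) 4, ∀ t ∈ Ioo (0 : ℝ) 16, Lop A b V u x t = 0)
    {g : En n → ℝ → ℝ} {τ : ℝ} (hτ : 0 < τ)
    (hg : ContDiffOn ℝ 2 (Function.uncurry g) (univ ×ˢ Ioi (-τ)))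
    (hg0 : ∀ x s, 2 ≤ ‖x‖ → g x s = 0)
    {χ : En n → ℝ} (hχ : ContDiff ℝ 2 χ) (hχ0 : ∀ x, 3 ≤ ‖x‖ → χ x = 0)
    {R : ℝ} {s : ℝ} (hs : s ∈ Ioo (0 : ℝ) 16)
    (hw : ∀ x, -(R * χ x) ≤ 2 * g x s * deriv (fun r => g x r) s
      - 4 * Λ * ∑ i, pder i (fun y => g y s) x ^ 2) :
    -(Λ * sb ^ 2 + 2 * sV) * (∫ x, (u x s * g x s) ^ 2) - R * (∫ x, u x s ^ 2 * χ x) ≤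
      ∫ x, deriv (fun r => (u x r * g x r) ^ 2) s := by
  have hg0' : ∀ x s, 3 ≤ ‖x‖ → g x s = 0 := fun x s h => hg0 x s (by linarith)
  have hs' : s ∈ Icc (0 : ℝ) 16 := ⟨hs.1.le, hs.2.le⟩
  have hcd := aux_contDiffAt_mul hu hg hτ hg0'
  have hcn := aux_continuousOn_mul hu.continuousOn hg.continuousOn hτ hg0'
  -- the square
  have hsq0 : ∀ x s, 3 ≤ ‖x‖ → (u x s * g x s) ^ 2 = 0 := fun x s h => by simp [hg0' x s h]
  have hsqc : ContinuousOn (Function.uncurry fun x r => (u x r * g x r) ^ 2)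
      (univ ×ˢ Icc (0 : ℝ) 16) := hcn.pow 2
  have hsqd : ∀ x, ∀ s ∈ Ioo (0 : ℝ) 16,
      ContDiffAt ℝ 1 (Function.uncurry fun x r => (u x r * g x r) ^ 2) (x, s) := fun x s hs =>
    ((hcd x hs).pow 2).of_le (by norm_num)
  have hI1 := (aux_hasDerivAt_integral hsqd hsqc hsq0 hs).1
  have hI2 := aux_slice_integrable hsqc hsq0 hs'
  have hχc : ContinuousOn (Function.uncurry fun x r => u x r ^ 2 * χ x)
      (univ ×ˢ Icc (0 : ℝ) 16) :=
    aux_continuousOn_mul (f := fun x r => u x r ^ 2) (g := fun x _ => χ x) (τ := 1)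
      (hu.continuousOn.pow 2) ((hχ.continuous.comp continuous_fst).continuousOn) one_pos
      (fun x _ h => hχ0 x h)
  have hI3 : Integrable (fun x => u x s ^ 2 * χ x) :=
    aux_slice_integrable hχc (fun x s h => by simp [hχ0 x h]) hs'
  -- slices
  have hUs : ContDiffOn ℝ 2 (fun z => u z s) (ball 0 4) := by
    refine hu.comp (f := fun z : En n => (z, s)) (by fun_prop) (fun z hz => ⟨hz, ?_⟩)
    norm_num; exact hs'
  have hgs : ContDiff ℝ 2 (fun z => g z s) := by
    rw [← contDiffOn_univ]
    refine hg.comp (f := fun z : En n => (z, s)) (by fun_prop) (fun z hz => ⟨trivial, ?_⟩)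
    simp; linarith [hs.1]
  have hg2 : ContDiffOn ℝ 2 (Function.uncurry fun x r => g x r ^ 2) (univ ×ˢ Ioi (-τ)) := hg.pow 2
  have hG : ContDiff ℝ 1 (fun x => u x s * g x s ^ 2) := by
    have h := aux_contDiffAt_mul hu hg2 hτ (fun x s h => by simp [hg0' x s h])
    rw [contDiff_iff_contDiffAt]
    intro x
    exact ((h x hs).comp x (f := fun z : En n => (z, s)) (by fun_prop)).of_le (by norm_num)
  have hG0 : ∀ x, 2 ≤ ‖x‖ → u x s * g x s ^ 2 = 0 := fun x h => by simp [hg0 x s h]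
  obtain ⟨hJ1, hJ2⟩ := aux_ibp hUs (a := fun x => A x s) hM (fun x y i j => by
    simpa using hlip x y s s hs.1.le hs.1.le i j) hG hG0
  have e : ∫ x, deriv (fun r => (u x r * g x r) ^ 2) s
      = ∫ x, (deriv (fun r => (u x r * g x r) ^ 2) s + 2 * ((∑ i, pder i (fun y => ∑ j,
        A y s i j * pder j (fun z => u z s) y) x) * (u x s * g x s ^ 2)
      + ∑ i, (∑ j, A x s i j * pder j (fun z => u z s) x) *
        pder i (fun x => u x s * g x s ^ 2) x)) := by
    rw [integral_add hI1 (hJ1.const_mul 2), integral_const_mul, hJ2]; simp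
  rw [e, ← integral_const_mul, ← integral_const_mul, ← integral_sub (hI2.const_mul _)
    (hI3.const_mul _)]
  refine integral_mono ((hI2.const_mul _).sub (hI3.const_mul _)) (hI1.add (hJ1.const_mul 2)) ?_
  intro x
  simp only
  by_cases hx : x ∈ ball (0 : En n) 4
  · have hQ : Qcyl n 4 ∈ nhds (x, s) := by
      refine prod_mem_nhds (isOpen_ball.mem_nhds hx) (Icc_mem_nhds hs.1 ?_)
      norm_num; exact hs.2
    have hO : (univ ×ˢ Ioi (-τ) : Set (En n × ℝ)) ∈ nhds (x, s) :=
      prod_mem_nhds Filter.univ_mem (Ioi_mem_nhds (by linarith [hs.1]))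
    have hline : DifferentiableAt ℝ (fun r : ℝ => (x, r)) s := by fun_prop
    have hud : DifferentiableAt ℝ (fun r => u x r) s :=
      DifferentiableAt.comp (g := Function.uncurry u) s
        ((hu.contDiffAt hQ).differentiableAt (by norm_num)) hline
    have hgd : DifferentiableAt ℝ (fun r => g x r) s :=
      DifferentiableAt.comp (g := Function.uncurry g) s
        ((hg.contDiffAt hO).differentiableAt (by norm_num)) hline
    have e1 : deriv (fun r => (u x r * g x r) ^ 2) s = 2 * (u x s * g x s) *
        (deriv (fun r => u x r) s * g x s + u x s * deriv (fun r => g x r) s) := by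
      have := ((hud.hasDerivAt.mul hgd.hasDerivAt).pow 2).deriv
      simp only [Pi.mul_apply, Nat.cast_ofNat, Nat.add_one_sub_one, pow_one] at this
      exact this
    have hux : DifferentiableAt ℝ (fun z => u z s) x :=
      (hUs.differentiableOn (by norm_num)).differentiableAt (isOpen_ball.mem_nhds hx)
    have hgx : DifferentiableAt ℝ (fun z => g z s) x := hgs.differentiable (by norm_num) x
    have e2 : ∀ i, pder i (fun x => u x s * g x s ^ 2) x = pder i (fun z => u z s) x * g x s ^ 2
        + 2 * u x s * g x s * pder i (fun z => g z s) x := by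
      intro i
      have h := (hux.hasFDerivAt.mul (hgx.hasFDerivAt.pow 2)).fderiv
      unfold pder
      have h' : fderiv ℝ (fun x => u x s * g x s ^ 2) x = _ := h
      rw [h']
      simp
      ring
    rw [e1]
    simp only [e2]
    have key := aux_pointwise hΛ (hell x s hs.1.le).1 (hell x s hs.1.le).2
      (WithLp.toLp 2 fun i => pder i (fun z => u z s) x)
      (WithLp.toLp 2 fun i => pder i (fun z => g z s) x) (b x s)
      (u := u x s) (us := deriv (fun r => u x r) s) (g := g x s)
      (gs := deriv (fun r => g x r) s) (R := R * χ x)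
      (dv := ∑ i, pder i (fun y => ∑ j, A y s i j * pder j (fun z => u z s) y) x)
      (hV x hx s hs') (hb x hx s hs') (heq x hx s hs) (hw x)
    simp only at key
    refine le_trans (le_of_eq ?_) key
    ring
  · have hx4 : 4 ≤ ‖x‖ := by simpa using hx
    have h1 : (fun r => (u x r * g x r) ^ 2) = fun _ => 0 := by
      funext r; exact hsq0 x r (by linarith)
    have h2 : ∀ i, pder i (fun x => u x s * g x s ^ 2) x = 0 := by
      intro i
      have : (fun x => u x s * g x s ^ 2) =ᶠ[nhds x] fun _ => (0 : ℝ) := by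
        have h3 : {p : En n | 2 < ‖p‖} ∈ nhds x :=
          (isOpen_lt continuous_const continuous_norm).mem_nhds (by simp; linarith)
        filter_upwards [h3] with p hp
        exact hG0 p (le_of_lt hp)
      rw [pder, this.fderiv_eq]; simp
    rw [h1, hχ0 x (by linarith), hg0 x s (by linarith)]
    simp [h2]


lemma aux_integrated {n : ℕ} {Λ M : ℝ} (hΛ : 1 ≤ Λ) (hM : 0 ≤ M)
    {A : En n → ℝ → Matrix (Fin n) (Fin n) ℝ} {b : En n → ℝ → En n}
    {V : En n → ℝ → ℝ} {u : En n → ℝ → ℝ} {sV sb : ℝ}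
    (hell : Elliptic A Λ) (hlip : ParLipschitz A M) (hV : SupBound V sV) (hb : SupBoundVec b sb)
    (hu : ContDiffOn ℝ 2 (Function.uncurry u) (Qcyl n 4))
    (heq : ∀ x ∈ ball (0 : En n) 4, ∀ t ∈ Ioo (0 : ℝ) 16, Lop A b V u x t = 0)
    {g : En n → ℝ → ℝ} {τ : ℝ} (hτ : 0 < τ) (hτ9 : τ ≤ 9)
    (hg : ContDiffOn ℝ 2 (Function.uncurry g) (univ ×ˢ Ioi (-τ)))
    (hg0 : ∀ x s, 2 ≤ ‖x‖ → g x s = 0)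
    {χ : En n → ℝ} (hχ : ContDiff ℝ 2 χ) (hχ0 : ∀ x, 3 ≤ ‖x‖ → χ x = 0)
    {R : ℝ}
    (hw : ∀ s ∈ Ioo (0 : ℝ) τ, ∀ x, -(R * χ x) ≤ 2 * g x s * deriv (fun r => g x r) s
      - 4 * Λ * ∑ i, pder i (fun y => g y s) x ^ 2)
    (hχn : ∀ x, 0 ≤ χ x) (hR : 0 ≤ R) (hc0 : 0 ≤ Λ * sb ^ 2 + 2 * sV) :
    ∫ x, (u x 0 * g x 0) ^ 2 ≤ Real.exp ((Λ * sb ^ 2 + 2 * sV) * τ) *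
      ((∫ x, (u x τ * g x τ) ^ 2) + R * ∫ s in (0 : ℝ)..τ, ∫ x, u x s ^ 2 * χ x) := by
  set c := Λ * sb ^ 2 + 2 * sV with hc
  have hg0' : ∀ x s, 3 ≤ ‖x‖ → g x s = 0 := fun x s h => hg0 x s (by linarith)
  have hcd := aux_contDiffAt_mul hu hg hτ hg0'
  have hcn := aux_continuousOn_mul hu.continuousOn hg.continuousOn hτ hg0'
  have hsq0 : ∀ x s, 3 ≤ ‖x‖ → (u x s * g x s) ^ 2 = 0 := fun x s h => by simp [hg0' x s h]
  have hsqc : ContinuousOn (Function.uncurry fun x r => (u x r * g x r) ^ 2)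
      (univ ×ˢ Icc (0 : ℝ) 16) := hcn.pow 2
  have hsqd : ∀ x, ∀ s ∈ Ioo (0 : ℝ) 16,
      ContDiffAt ℝ 1 (Function.uncurry fun x r => (u x r * g x r) ^ 2) (x, s) := fun x s hs =>
    ((hcd x hs).pow 2).of_le (by norm_num)
  have hχc : ContinuousOn (Function.uncurry fun x r => u x r ^ 2 * χ x)
      (univ ×ˢ Icc (0 : ℝ) 16) :=
    aux_continuousOn_mul (f := fun x r => u x r ^ 2) (g := fun x _ => χ x) (τ := 1)
      (hu.continuousOn.pow 2) ((hχ.continuous.comp continuous_fst).continuousOn) one_pos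
      (fun x _ h => hχ0 x h)
  have hFc := aux_integral_continuousOn hsqc hsq0
  have hhc := aux_integral_continuousOn hχc (fun x s h => by simp [hχ0 x h])
  set F : ℝ → ℝ := fun s => ∫ x, (u x s * g x s) ^ 2 with hF
  set h : ℝ → ℝ := fun s => ∫ x, u x s ^ 2 * χ x with hh
  have hsub : Icc (0 : ℝ) τ ⊆ Icc 0 16 := Icc_subset_Icc_right (by linarith)
  have hIntb : ∀ s ∈ Icc (0 : ℝ) τ, IntervalIntegrable h volume 0 s := fun s hs =>
    (hhc.mono (by rw [uIcc_of_le hs.1]; exact (Icc_subset_Icc_right hs.2).trans hsub)).intervalIntegrable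
  have hderiv : ∀ s ∈ Ioo (0 : ℝ) τ, HasDerivAt (fun s => Real.exp (c * s) *
      (F s + R * ∫ r in (0 : ℝ)..s, h r))
      (Real.exp (c * s) * c * (F s + R * ∫ r in (0 : ℝ)..s, h r) + Real.exp (c * s) *
        ((∫ x, deriv (fun r => (u x r * g x r) ^ 2) s) + R * h s)) s := by
    intro s hs
    have hs16 : s ∈ Ioo (0 : ℝ) 16 := ⟨hs.1, by linarith [hs.2]⟩
    have h1 := (aux_hasDerivAt_integral hsqd hsqc hsq0 hs16).2
    have hca : ContinuousAt h s := hhc.continuousAt (Icc_mem_nhds hs16.1 hs16.2)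
    have h2 : HasDerivAt (fun s => ∫ r in (0 : ℝ)..s, h r) (h s) s := by
      refine intervalIntegral.integral_hasDerivAt_right (hIntb s ⟨hs.1.le, hs.2.le⟩) ?_ hca
      exact (hhc.mono Ioo_subset_Icc_self).stronglyMeasurableAtFilter isOpen_Ioo s hs16
    have h3 : HasDerivAt (fun s => Real.exp (c * s)) (Real.exp (c * s) * c) s := by
      simpa using ((hasDerivAt_id s).const_mul c).exp
    exact h3.mul (h1.add (h2.const_mul R))
  have hmono : MonotoneOn (fun s => Real.exp (c * s) * (F s + R * ∫ r in (0 : ℝ)..s, h r))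
      (Icc 0 τ) := by
    refine monotoneOn_of_deriv_nonneg (convex_Icc _ _) ?_ ?_ ?_
    · refine ContinuousOn.mul (by fun_prop) ((hFc.mono hsub).add (continuousOn_const.mul ?_))
      have := intervalIntegral.continuousOn_primitive_interval (μ := volume) (f := h) (a := 0) (b := τ)
        (by rw [uIcc_of_le hτ.le]; exact (hhc.mono hsub).integrableOn_Icc)
      rwa [uIcc_of_le hτ.le] at this
    · rw [interior_Icc]
      exact fun s hs => (hderiv s hs).differentiableAt.differentiableWithinAt
    · rw [interior_Icc]
      intro s hs
      rw [(hderiv s hs).deriv]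
      have hs16 : s ∈ Ioo (0 : ℝ) 16 := ⟨hs.1, by linarith [hs.2]⟩
      have key := aux_energy hΛ hM hell hlip hV hb hu heq hτ hg hg0 hχ hχ0 hs16 (hw s hs)
      have hpos : 0 ≤ ∫ r in (0 : ℝ)..s, h r :=
        intervalIntegral.integral_nonneg hs.1.le fun r _ =>
          integral_nonneg fun x => mul_nonneg (sq_nonneg _) (hχn x)
      have e : Real.exp (c * s) * c * (F s + R * ∫ r in (0 : ℝ)..s, h r) + Real.exp (c * s) *
        ((∫ x, deriv (fun r => (u x r * g x r) ^ 2) s) + R * h s) = Real.exp (c * s) *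
        (((∫ x, deriv (fun r => (u x r * g x r) ^ 2) s) - (-c * F s - R * h s))
          + c * (R * ∫ r in (0 : ℝ)..s, h r)) := by ring
      rw [e]
      refine mul_nonneg (Real.exp_pos _).le (add_nonneg ?_ (by positivity))
      linarith
  have := hmono (left_mem_Icc.2 hτ.le) (right_mem_Icc.2 hτ.le) hτ.le
  simpa using this

lemma aux_fubini {n : ℕ} {u : En n → ℝ → ℝ}
    (hu : ContinuousOn (Function.uncurry u) (Qcyl n 4))
    {χ : En n → ℝ} (hχ : Continuous χ) (hχ0 : ∀ x, 3 ≤ ‖x‖ → χ x = 0)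
    (hχ1 : ∀ x, χ x ≤ 1) {τ : ℝ} (hτ : 0 < τ) (hτ9 : τ ≤ 9) :
    ∫ s in (0 : ℝ)..τ, ∫ x, u x s ^ 2 * χ x ≤ ∫ p in Qcyl n 3, u p.1 p.2 ^ 2 := by
  have hsub : closedBall (0 : En n) 3 ×ˢ Icc (0 : ℝ) 9 ⊆ Qcyl n 4 := by
    refine prod_mono (closedBall_subset_ball (by norm_num)) (Icc_subset_Icc_right (by norm_num))
  have hc : IsCompact (closedBall (0 : En n) 3 ×ˢ Icc (0 : ℝ) 9) :=
    (isCompact_closedBall _ _).prod isCompact_Icc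
  have hu2 : ContinuousOn (fun p : En n × ℝ => u p.1 p.2 ^ 2) (Qcyl n 4) := hu.pow 2
  have hI : IntegrableOn (fun p : En n × ℝ => u p.1 p.2 ^ 2)
      (closedBall (0 : En n) 3 ×ˢ Icc (0 : ℝ) 9) := (hu2.mono hsub).integrableOn_compact hc
  have hIχ : IntegrableOn (fun p : En n × ℝ => u p.1 p.2 ^ 2 * χ p.1)
      (closedBall (0 : En n) 3 ×ˢ Icc (0 : ℝ) 9) :=
    ((hu2.mono hsub).mul (hχ.comp continuous_fst).continuousOn).integrableOn_compact hc
  have hs1 : ball (0 : En n) 3 ×ˢ Ioc (0 : ℝ) τ ⊆ closedBall (0 : En n) 3 ×ˢ Icc (0 : ℝ) 9 :=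
    prod_mono ball_subset_closedBall (Ioc_subset_Icc_self.trans (Icc_subset_Icc_right hτ9))
  have hs2 : Qcyl n 3 ⊆ closedBall (0 : En n) 3 ×ˢ Icc (0 : ℝ) 9 :=
    prod_mono ball_subset_closedBall (Icc_subset_Icc_right (by norm_num))
  have hs3 : ball (0 : En n) 3 ×ˢ Ioc (0 : ℝ) τ ⊆ Qcyl n 3 :=
    prod_mono Subset.rfl (Ioc_subset_Icc_self.trans (Icc_subset_Icc_right (by linarith)))
  have e : ∫ s in (0 : ℝ)..τ, ∫ x, u x s ^ 2 * χ x
      = ∫ p in ball (0 : En n) 3 ×ˢ Ioc (0 : ℝ) τ, u p.1 p.2 ^ 2 * χ p.1 := by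
    have h1 := hIχ.mono_set hs1
    rw [IntegrableOn, Measure.volume_eq_prod, ← Measure.prod_restrict] at h1
    rw [Measure.volume_eq_prod, ← Measure.prod_restrict, integral_prod_symm _ h1,
      intervalIntegral.integral_of_le hτ.le]
    refine integral_congr_ae (.of_forall fun s => ?_)
    simp only
    rw [setIntegral_eq_integral_of_forall_compl_eq_zero]
    intro x hx
    rw [hχ0 x (by simpa using hx), mul_zero]
  rw [e]
  calc _ ≤ ∫ p in ball (0 : En n) 3 ×ˢ Ioc (0 : ℝ) τ, u p.1 p.2 ^ 2 := by
        refine setIntegral_mono (hIχ.mono_set hs1) (hI.mono_set hs1) fun p => ?_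
        exact mul_le_of_le_one_right (sq_nonneg _) (hχ1 _)
    _ ≤ _ := setIntegral_mono_set (hI.mono_set hs2) (.of_forall fun p => sq_nonneg _)
        hs3.eventuallyLE

lemma aux_bump (n : ℕ) {r R : ℝ} (hr : 0 < r) (hrR : r < R) :
    ∃ (η : En n → ℝ) (C : ℝ), 1 ≤ C ∧ ContDiff ℝ 2 η ∧ (∀ x, 0 ≤ η x) ∧ (∀ x, η x ≤ 1) ∧
      (∀ x, ‖x‖ ≤ r → η x = 1) ∧ (∀ x, R ≤ ‖x‖ → η x = 0) ∧
      (∀ i x, ‖x‖ < r → pder i η x = 0) ∧ (∀ i x, R < ‖x‖ → pder i η x = 0) ∧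
      ∀ x, ∑ i, pder i η x ^ 2 ≤ C := by
  let f : ContDiffBump (0 : En n) := ⟨r, R, hr, hrR⟩
  have hone : ∀ x, ‖x‖ ≤ r → f x = 1 := fun x hx =>
    f.one_of_mem_closedBall (by simpa using hx)
  have hzero : ∀ x, R ≤ ‖x‖ → f x = 0 := fun x hx =>
    f.zero_of_le_dist (by simpa using hx)
  have hcd : ContDiff ℝ 2 f := f.contDiff
  have hz2 : ∀ i x, R < ‖x‖ → pder i f x = 0 := by
    intro i x hx
    have : (f : En n → ℝ) =ᶠ[nhds x] fun _ => (0 : ℝ) := by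
      filter_upwards [(isOpen_lt continuous_const continuous_norm).mem_nhds hx] with y hy
      exact hzero y (le_of_lt hy)
    rw [pder, this.fderiv_eq]; simp
  have hcont : Continuous fun x => ∑ i, pder i f x ^ 2 := by
    refine continuous_finsetSum _ fun i _ => Continuous.pow ?_ 2
    exact (hcd.continuous_fderiv (by norm_num)).clm_apply continuous_const
  obtain ⟨C, hC⟩ := (isCompact_closedBall (0 : En n) R).exists_bound_of_continuousOn
    hcont.continuousOn
  refine ⟨f, max C 1, le_max_right _ _, hcd, fun x => f.nonneg, fun x => f.le_one, hone, hzero,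
    ?_, hz2, ?_⟩
  · intro i x hx
    have : (f : En n → ℝ) =ᶠ[nhds x] fun _ => (1 : ℝ) := by
      filter_upwards [(isOpen_lt continuous_norm continuous_const).mem_nhds hx] with y hy
      exact hone y (le_of_lt hy)
    rw [pder, this.fderiv_eq]; simp
  · intro x
    by_cases hx : ‖x‖ ≤ R
    · exact (le_abs_self _).trans ((hC x (by simpa using hx)).trans (le_max_left _ _))
    · have := fun i => hz2 i x (not_le.1 hx)
      simp [this]

lemma aux_weight (n : ℕ) {Λ : ℝ} (hΛ : 1 ≤ Λ) :
    ∃ (κ a : ℝ) (χ : En n → ℝ), 0 < κ ∧ 0 < a ∧ ContDiff ℝ 2 χ ∧ (∀ x, 3 ≤ ‖x‖ → χ x = 0) ∧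
      (∀ x, 0 ≤ χ x) ∧ (∀ x, χ x ≤ 1) ∧ (∀ x, ‖x‖ ≤ 2 → χ x = 1) ∧
      ∀ ρ τ : ℝ, 0 < ρ → ρ ≤ 1 → 0 < τ → ∃ g : En n → ℝ → ℝ,
        ContDiffOn ℝ 2 (Function.uncurry g) (univ ×ˢ Ioi (-τ)) ∧
        (∀ x s, 2 * ρ ≤ ‖x‖ → g x s = 0) ∧ (∀ x, ‖x‖ ≤ ρ → g x 0 = 1) ∧
        (∀ x s, 0 ≤ s → 0 ≤ g x s ∧ g x s ≤ 1) ∧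
        ∀ s ∈ Ioo (0 : ℝ) τ, ∀ x, -(a / ρ ^ 2 * Real.exp (-(κ * (ρ ^ 2 / τ))) * χ x) ≤
          2 * g x s * deriv (fun r => g x r) s
          - 4 * Λ * ∑ i, pder i (fun y => g y s) x ^ 2 := by
  obtain ⟨χ, -, -, hχ, hχn, hχ1, hχe, hχ0, -⟩ := aux_bump n (r := 2) (R := 3) (by norm_num)
    (by norm_num)
  obtain ⟨η, C, hC1, hη, hηn, hη1, hηe, hη0, -, -, hηC⟩ :=
    aux_bump n (r := 1) (R := 3 / 2) (by norm_num) (by norm_num)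
  obtain ⟨θ, D, hD1, hθ, hθn, hθ1, hθe, hθ0, hθd, hθd', hθD⟩ :=
    aux_bump n (r := 3 / 2) (R := 2) (by norm_num) (by norm_num)
  have hΛ0 : 0 < Λ := by linarith
  set κ : ℝ := 1 / (8 * Λ * C) with hκ
  have hκ0 : 0 < κ := by positivity
  have hκ1 : 8 * Λ * κ * C = 1 := by rw [hκ]; field_simp
  refine ⟨κ / 2, 8 * Λ * D, χ, by positivity, by positivity, hχ, hχ0, hχn, hχ1, hχe, ?_⟩
  intro ρ τ hρ hρ1 hτ
  have hnorm : ∀ x : En n, ‖ρ⁻¹ • x‖ = ‖x‖ / ρ := fun x => by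
    rw [norm_smul, Real.norm_eq_abs, abs_of_pos (by positivity)]; field_simp
  refine ⟨fun x s => θ (ρ⁻¹ • x) *
    Real.exp (-(κ * ρ ^ 2 * (1 - η (ρ⁻¹ • x)) ^ 2) / (2 * (s + τ))), ?_, ?_, ?_, ?_, ?_⟩
  · have h1 : ContDiff ℝ 2 (fun p : En n × ℝ => θ (ρ⁻¹ • p.1)) := hθ.comp (by fun_prop)
    have h2 : ContDiff ℝ 2 (fun p : En n × ℝ => η (ρ⁻¹ • p.1)) := hη.comp (by fun_prop)
    refine h1.contDiffOn.mul (ContDiffOn.exp (ContDiffOn.div ?_ ?_ ?_))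
    · exact (contDiff_const.mul ((contDiff_const.sub h2).pow 2)).neg.contDiffOn
    · exact ContDiff.contDiffOn (by fun_prop)
    · rintro ⟨x, s⟩ ⟨-, hs⟩
      have : -τ < s := hs
      simp only; intro h; linarith
  · intro x s hx
    simp only
    rw [hθ0 _ (by rw [hnorm, le_div_iff₀ hρ]; exact hx), zero_mul]
  · intro x hx
    have h1 : ‖ρ⁻¹ • x‖ ≤ 1 := by rw [hnorm, div_le_iff₀ hρ]; linarith
    simp only
    rw [hθe _ (by linarith), hηe _ h1]; simp
  · intro x s hs
    refine ⟨mul_nonneg (hθn _) (Real.exp_pos _).le, ?_⟩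
    refine mul_le_one₀ (hθ1 _) (Real.exp_pos _).le (Real.exp_le_one_iff.2 ?_)
    exact div_nonpos_of_nonpos_of_nonneg (neg_nonpos.2 (by positivity)) (by linarith)
  · intro s hs x
    simp only
    have hst : 0 < s + τ := by linarith [hs.1]
    set y := ρ⁻¹ • x with hy
    set ψ := 1 - η y with hψ
    set E := Real.exp (-(κ * ρ ^ 2 * ψ ^ 2) / (2 * (s + τ))) with hE
    have hEpos : 0 < E := Real.exp_pos _
    have hdt : deriv (fun r => θ y * Real.exp (-(κ * ρ ^ 2 * ψ ^ 2) / (2 * (r + τ)))) s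
        = θ y * (E * (κ * ρ ^ 2 * ψ ^ 2 / (2 * (s + τ) ^ 2))) := by
      have h1 : HasDerivAt (fun r : ℝ => 2 * (r + τ)) 2 s := by
        simpa using ((hasDerivAt_id s).add_const τ).const_mul 2
      have h2 := (((hasDerivAt_const s (-(κ * ρ ^ 2 * ψ ^ 2))).div h1
        (by positivity)).exp.const_mul (θ y)).deriv
      simp only [Pi.div_apply] at h2
      rw [h2, ← hE]
      field_simp
      ring
    have hdx : ∀ i, pder i (fun z => θ (ρ⁻¹ • z) *
        Real.exp (-(κ * ρ ^ 2 * (1 - η (ρ⁻¹ • z)) ^ 2) / (2 * (s + τ)))) x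
        = E * (ρ⁻¹ * pder i θ y + θ y * (κ * ρ * ψ / (s + τ)) * pder i η y) := by
      intro i
      have hlin : HasFDerivAt (fun z : En n => ρ⁻¹ • z) (ρ⁻¹ • ContinuousLinearMap.id ℝ (En n)) x :=
        (hasFDerivAt_id x).const_smul ρ⁻¹
      have h1 : HasFDerivAt (fun z => θ (ρ⁻¹ • z)) _ x :=
        ((hθ.differentiable (by norm_num)) y).hasFDerivAt.comp x hlin
      have h2 : HasFDerivAt (fun z => η (ρ⁻¹ • z)) _ x :=
        ((hη.differentiable (by norm_num)) y).hasFDerivAt.comp x hlin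
      have h3 : HasFDerivAt (fun z => Real.exp ((-(κ * ρ ^ 2) / (2 * (s + τ))) *
        (1 - η (ρ⁻¹ • z)) ^ 2)) _ x := (((h2.const_sub 1).pow 2).const_mul
          (-(κ * ρ ^ 2) / (2 * (s + τ)))).exp
      have h4 := (h1.mul h3).fderiv
      have e : (fun z => θ (ρ⁻¹ • z) *
        Real.exp (-(κ * ρ ^ 2 * (1 - η (ρ⁻¹ • z)) ^ 2) / (2 * (s + τ)))) =
        (fun z => θ (ρ⁻¹ • z)) * (fun z => Real.exp ((-(κ * ρ ^ 2) / (2 * (s + τ))) *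
        (1 - η (ρ⁻¹ • z)) ^ 2)) := by
        funext z
        simp only [Pi.mul_apply]
        congr 2
        ring
      have e' : Real.exp ((-(κ * ρ ^ 2) / (2 * (s + τ))) * (1 - η (ρ⁻¹ • x)) ^ 2) = E := by
        rw [hE]; congr 1; rw [hψ, hy]; ring
      rw [pder, e, h4, e']
      simp only [← hy, ← hψ, pder]
      simp
      field_simp
      ring
    rw [hdt]
    simp only [hdx]
    have hq : ∀ i, (E * (ρ⁻¹ * pder i θ y + θ y * (κ * ρ * ψ / (s + τ)) * pder i η y)) ^ 2 ≤
        2 * E ^ 2 * (ρ⁻¹) ^ 2 * pder i θ y ^ 2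
          + 2 * E ^ 2 * (θ y * (κ * ρ * ψ / (s + τ))) ^ 2 * pder i η y ^ 2 := by
      intro i
      nlinarith [mul_nonneg (sq_nonneg E) (sq_nonneg (ρ⁻¹ * pder i θ y
        - θ y * (κ * ρ * ψ / (s + τ)) * pder i η y))]
    have hq2 := Finset.sum_le_sum fun i (_ : i ∈ Finset.univ) => hq i
    rw [Finset.sum_add_distrib, ← Finset.mul_sum, ← Finset.mul_sum] at hq2
    have hq3 : 2 * E ^ 2 * (θ y * (κ * ρ * ψ / (s + τ))) ^ 2 * ∑ i, pder i η y ^ 2 ≤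
        2 * E ^ 2 * (θ y * (κ * ρ * ψ / (s + τ))) ^ 2 * C :=
      mul_le_mul_of_nonneg_left (hηC y) (by positivity)
    have hq4 : 4 * Λ * (2 * E ^ 2 * (θ y * (κ * ρ * ψ / (s + τ))) ^ 2 * C)
        = 2 * (θ y * E) * (θ y * (E * (κ * ρ ^ 2 * ψ ^ 2 / (2 * (s + τ) ^ 2)))) := by
      have : 4 * Λ * (2 * E ^ 2 * (θ y * (κ * ρ * ψ / (s + τ))) ^ 2 * C)
        = (8 * Λ * κ * C) * (E ^ 2 * θ y ^ 2 * κ * (ρ * ψ / (s + τ)) ^ 2) := by ring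
      rw [this, hκ1]
      field_simp
    have hq5 : 4 * Λ * (2 * E ^ 2 * (ρ⁻¹) ^ 2 * ∑ i, pder i θ y ^ 2) ≤
        8 * Λ * D / ρ ^ 2 * Real.exp (-(κ / 2 * (ρ ^ 2 / τ))) * χ x := by
      by_cases hcase : ‖y‖ < 3 / 2 ∨ 2 < ‖y‖
      · have h0 : ∀ i, pder i θ y = 0 := fun i => hcase.elim (hθd i y) (hθd' i y)
        simp only [h0]
        have := hχn x
        simp
        positivity
      · push Not at hcase
        have hx2 : ‖x‖ ≤ 2 := by
          have := hcase.2
          rw [hnorm, div_le_iff₀ hρ] at this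
          linarith
        have hψ1 : ψ = 1 := by rw [hψ, hη0 y hcase.1]; ring
        have hE2 : E ^ 2 ≤ Real.exp (-(κ / 2 * (ρ ^ 2 / τ))) := by
          rw [hE, ← Real.exp_nat_mul, hψ1]
          refine Real.exp_le_exp.2 ?_
          have h1 : ρ ^ 2 / (2 * τ) ≤ ρ ^ 2 / (s + τ) :=
            div_le_div_of_nonneg_left (by positivity) hst (by linarith [hs.2])
          have h2 := mul_le_mul_of_nonneg_left h1 hκ0.le
          have h3 : κ / 2 * (ρ ^ 2 / τ) = κ * (ρ ^ 2 / (2 * τ)) := by field_simp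
          have h4 : ((2 : ℕ) : ℝ) * (-(κ * ρ ^ 2 * 1 ^ 2) / (2 * (s + τ)))
            = -(κ * (ρ ^ 2 / (s + τ))) := by push_cast; field_simp
          rw [h3, h4]
          linarith
        rw [hχe x hx2]
        have h5 : E ^ 2 * ∑ i, pder i θ y ^ 2 ≤ Real.exp (-(κ / 2 * (ρ ^ 2 / τ))) * D :=
          mul_le_mul hE2 (hθD y) (Finset.sum_nonneg fun i _ => sq_nonneg _) (Real.exp_pos _).le
        have h6 := mul_le_mul_of_nonneg_left h5 (show 0 ≤ 8 * Λ / ρ ^ 2 by positivity)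
        refine le_trans (le_of_eq ?_) (h6.trans (le_of_eq ?_)) <;> field_simp
        ring
    have hq6 := mul_le_mul_of_nonneg_left hq2 (show 0 ≤ 4 * Λ by positivity)
    have hq7 := mul_le_mul_of_nonneg_left hq3 (show 0 ≤ 4 * Λ by positivity)
    linarith


lemma aux_main (n : ℕ) (Λ M : ℝ) (hΛ : 1 ≤ Λ) (hM : 0 ≤ M) :
    ∃ κ a : ℝ, 0 < κ ∧ 0 < a ∧
      ∀ (A : En n → ℝ → Matrix (Fin n) (Fin n) ℝ) (b : En n → ℝ → En n)
        (V : En n → ℝ → ℝ) (u : En n → ℝ → ℝ) (sV sb : ℝ), 0 ≤ sV → 0 ≤ sb →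
        Elliptic A Λ → ParLipschitz A M →
        SupBound V sV → SupBoundVec b sb →
        ContDiffOn ℝ 2 (Function.uncurry u) (Qcyl n 4) →
        (∀ x ∈ ball (0 : En n) 4, ∀ t ∈ Ioo (0 : ℝ) 16, Lop A b V u x t = 0) →
        ∀ ρ : ℝ, 0 < ρ → ρ ≤ 1 →
          (∀ t : ℝ, 0 < t → t ≤ 9 → (∫ x in ball (0 : En n) ρ, u x 0 ^ 2) ≤
            Real.exp ((Λ * sb ^ 2 + 2 * sV) * t) * ((∫ x in ball (0 : En n) (2 * ρ), u x t ^ 2)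
              + a / ρ ^ 2 * Real.exp (-(κ * (ρ ^ 2 / t))) * ∫ p in Qcyl n 3, u p.1 p.2 ^ 2)) ∧
          ρ ^ 2 * (∫ x in ball (0 : En n) ρ, u x 0 ^ 2) ≤ (1 + sV + sb ^ 2) *
            (Real.exp (2 * Λ) * (1 + a) * ∫ p in Qcyl n 3, u p.1 p.2 ^ 2) := by
  obtain ⟨κ, a, χ, hκ, ha, hχ, hχ0, hχn, hχ1, hχe, H⟩ := aux_weight n hΛ
  refine ⟨κ, a, hκ, ha, ?_⟩
  intro A b V u sV sb hsV hsb hell hlip hV hb hu heq ρ hρ hρ1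
  set J := ∫ p in Qcyl n 3, u p.1 p.2 ^ 2 with hJ
  set I0 := ∫ x in ball (0 : En n) ρ, u x 0 ^ 2 with hI0
  have hJ0 : 0 ≤ J := integral_nonneg fun p => sq_nonneg _
  have hc0 : 0 ≤ Λ * sb ^ 2 + 2 * sV := by positivity
  have hIntb : ∀ s ∈ Icc (0 : ℝ) 16, IntegrableOn (fun x => u x s ^ 2)
      (ball (0 : En n) (2 * ρ)) := by
    intro s hs
    have h1 : ContinuousOn (fun x => u x s ^ 2) (closedBall (0 : En n) 2) := by
      refine ContinuousOn.pow ?_ 2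
      refine hu.continuousOn.comp (f := fun z : En n => (z, s)) (by fun_prop) (fun z hz => ⟨?_, ?_⟩)
      · exact closedBall_subset_ball (by norm_num) hz
      · norm_num; exact hs
    refine (h1.integrableOn_compact (isCompact_closedBall _ _)).mono_set ?_
    exact ball_subset_closedBall.trans (closedBall_subset_closedBall (by linarith))
  have h1 : ∀ t : ℝ, 0 < t → t ≤ 9 → I0 ≤
      Real.exp ((Λ * sb ^ 2 + 2 * sV) * t) * ((∫ x in ball (0 : En n) (2 * ρ), u x t ^ 2)
        + a / ρ ^ 2 * Real.exp (-(κ * (ρ ^ 2 / t))) * J) := by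
    intro t ht ht9
    obtain ⟨g, hg, hg0, hg1, hgb, hgw⟩ := H ρ t hρ hρ1 ht
    have hg0' : ∀ x s, 2 ≤ ‖x‖ → g x s = 0 := fun x s hx => hg0 x s (by linarith)
    have hR : 0 ≤ a / ρ ^ 2 * Real.exp (-(κ * (ρ ^ 2 / t))) := by positivity
    have key := aux_integrated hΛ hM hell hlip hV hb hu heq ht ht9 hg hg0' hχ hχ0 hgw hχn hR hc0
    have hcn := aux_continuousOn_mul hu.continuousOn hg.continuousOn ht
      (fun x s hx => hg0' x s (by linarith))
    have hsqc : ContinuousOn (Function.uncurry fun x r => (u x r * g x r) ^ 2)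
        (univ ×ˢ Icc (0 : ℝ) 16) := hcn.pow 2
    have hsl : ∀ s ∈ Icc (0 : ℝ) 16, Integrable (fun x => (u x s * g x s) ^ 2) := fun s hs =>
      aux_slice_integrable hsqc
        (fun x s hx => by simp [hg0' x s (by linarith)]) hs
    have e1 : I0 ≤ ∫ x, (u x 0 * g x 0) ^ 2 := by
      have : I0 = ∫ x in ball (0 : En n) ρ, (u x 0 * g x 0) ^ 2 := by
        refine setIntegral_congr_fun measurableSet_ball fun x hx => ?_
        rw [hg1 x (mem_ball_zero_iff.1 hx).le, mul_one]
      rw [this]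
      exact setIntegral_le_integral (hsl 0 (by norm_num)) (.of_forall fun x => sq_nonneg _)
    have ht16 : t ∈ Icc (0 : ℝ) 16 := ⟨ht.le, by linarith⟩
    have e2 : ∫ x, (u x t * g x t) ^ 2 ≤ ∫ x in ball (0 : En n) (2 * ρ), u x t ^ 2 := by
      rw [← setIntegral_eq_integral_of_forall_compl_eq_zero (s := ball (0 : En n) (2 * ρ))]
      · refine setIntegral_mono (hsl t ht16).integrableOn (hIntb t ht16) fun x => ?_
        simp only
        rw [mul_pow]
        exact mul_le_of_le_one_right (sq_nonneg _) (pow_le_one₀ (hgb x t ht.le).1 (hgb x t ht.le).2)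
      · intro x hx
        rw [hg0 x t (by simpa using hx)]; simp
    have e3 := aux_fubini hu.continuousOn hχ.continuous hχ0 hχ1 ht ht9
    refine e1.trans (key.trans (mul_le_mul_of_nonneg_left ?_ (Real.exp_pos _).le))
    exact add_le_add e2 (mul_le_mul_of_nonneg_left e3 hR)
  refine ⟨h1, ?_⟩
  set S := 1 + sV + sb ^ 2 with hS
  have hS1 : 1 ≤ S := by nlinarith [sq_nonneg sb]
  have hS0 : 0 < S := by linarith
  set τ := ρ ^ 2 / S with hτ
  have hτ0 : 0 < τ := by positivity
  have hρ2 : ρ ^ 2 ≤ 1 := pow_le_one₀ hρ.le hρ1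
  have hτρ : τ ≤ ρ ^ 2 := div_le_self (by positivity) hS1
  have hτ9 : τ ≤ 9 := by linarith
  have hτS : τ * S = ρ ^ 2 := by rw [hτ]; field_simp
  have hcτ : (Λ * sb ^ 2 + 2 * sV) * τ ≤ 2 * Λ := by
    have h2 : Λ * sb ^ 2 + 2 * sV ≤ 2 * Λ * S := by
      nlinarith [mul_nonneg (sub_nonneg.2 hΛ) hsV, mul_nonneg (by linarith : 0 ≤ Λ) (sq_nonneg sb)]
    calc _ ≤ 2 * Λ * S * τ := mul_le_mul_of_nonneg_right h2 hτ0.le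
      _ = 2 * Λ * ρ ^ 2 := by rw [← hτS]; ring
      _ ≤ _ := by nlinarith
  have hχc : ContinuousOn (Function.uncurry fun x r => u x r ^ 2 * χ x)
      (univ ×ˢ Icc (0 : ℝ) 16) :=
    aux_continuousOn_mul (f := fun x r => u x r ^ 2) (g := fun x _ => χ x) (τ := 1)
      (hu.continuousOn.pow 2) ((hχ.continuous.comp continuous_fst).continuousOn) one_pos
      (fun x _ h => hχ0 x h)
  have hhc := aux_integral_continuousOn hχc (fun x s h => by simp [hχ0 x h])
  have hii : IntervalIntegrable (fun s => ∫ x, u x s ^ 2 * χ x) volume 0 τ :=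
    (hhc.mono (by rw [uIcc_of_le hτ0.le]; exact Icc_subset_Icc_right (by linarith))).intervalIntegrable
  have hpt : ∀ s ∈ Ioo (0 : ℝ) τ, I0 ≤ Real.exp (2 * Λ) *
      ((∫ x, u x s ^ 2 * χ x) + a / ρ ^ 2 * J) := by
    intro s hs
    have hs16 : s ∈ Icc (0 : ℝ) 16 := ⟨hs.1.le, by linarith [hs.2]⟩
    refine (h1 s hs.1 (by linarith [hs.2])).trans ?_
    have e2 : ∫ x in ball (0 : En n) (2 * ρ), u x s ^ 2 ≤ ∫ x, u x s ^ 2 * χ x := by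
      have : ∫ x in ball (0 : En n) (2 * ρ), u x s ^ 2 =
          ∫ x in ball (0 : En n) (2 * ρ), u x s ^ 2 * χ x := by
        refine setIntegral_congr_fun measurableSet_ball fun x hx => ?_
        rw [hχe x (by have := mem_ball_zero_iff.1 hx; linarith), mul_one]
      rw [this]
      exact setIntegral_le_integral
        (aux_slice_integrable hχc (fun x s h => by simp [hχ0 x h]) hs16)
        (.of_forall fun x => mul_nonneg (sq_nonneg _) (hχn x))
    have e3 : Real.exp (-(κ * (ρ ^ 2 / s))) ≤ 1 := by
      rw [Real.exp_le_one_iff]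
      have := hs.1
      have : 0 ≤ κ * (ρ ^ 2 / s) := by positivity
      linarith
    have e4 : a / ρ ^ 2 * Real.exp (-(κ * (ρ ^ 2 / s))) * J ≤ a / ρ ^ 2 * J :=
      mul_le_mul_of_nonneg_right (mul_le_of_le_one_right (by positivity) e3) hJ0
    have e5 : Real.exp ((Λ * sb ^ 2 + 2 * sV) * s) ≤ Real.exp (2 * Λ) :=
      Real.exp_le_exp.2 ((mul_le_mul_of_nonneg_left hs.2.le hc0).trans hcτ)
    refine mul_le_mul e5 (add_le_add e2 e4) ?_ (Real.exp_pos _).le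
    have : 0 ≤ ∫ x in ball (0 : En n) (2 * ρ), u x s ^ 2 := integral_nonneg fun x => sq_nonneg _
    positivity
  have hmono := intervalIntegral.integral_mono_on_of_le_Ioo (μ := volume) hτ0.le
    (f := fun _ => I0) (g := fun s => Real.exp (2 * Λ) *
      ((∫ x, u x s ^ 2 * χ x) + a / ρ ^ 2 * J)) (by simp)
      ((hii.add (by simp)).const_mul _) hpt
  rw [intervalIntegral.integral_const_mul, intervalIntegral.integral_add hii (by simp)] at hmono
  simp only [intervalIntegral.integral_const, smul_eq_mul, sub_zero] at hmono
  have e3 := aux_fubini hu.continuousOn hχ.continuous hχ0 hχ1 hτ0 hτ9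
  have e6 : τ * (a / ρ ^ 2 * J) ≤ a * J := by
    have : τ * (a / ρ ^ 2 * J) = (τ / ρ ^ 2) * (a * J) := by ring
    rw [this]
    exact mul_le_of_le_one_left (by positivity) ((div_le_one (by positivity)).2 hτρ)
  have e7 : τ * I0 ≤ Real.exp (2 * Λ) * (1 + a) * J := by
    refine hmono.trans ?_
    rw [mul_assoc]
    exact mul_le_mul_of_nonneg_left (by linarith) (Real.exp_pos _).le
  calc ρ ^ 2 * I0 = S * (τ * I0) := by rw [← hτS]; ring
    _ ≤ _ := mul_le_mul_of_nonneg_left e7 hS0.le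

set_option maxHeartbeats 1000000 in
lemma aux_final {κ a Λ : ℝ} (hκ : 0 < κ) (ha : 0 < a) (hΛ : 1 ≤ Λ) {N : ℝ}
    (hN : N = 2 + Λ + Real.exp (2 * Λ) * (1 + a) + a + 1 / κ)
    {sV sb ρ t I0 J h : ℝ} (hsV : 0 ≤ sV) (hsb : 0 ≤ sb) (hρ : 0 < ρ) (hρ1 : ρ ≤ 1)
    (hI0 : 0 < I0) (ht : 0 < t) (hh : 0 ≤ h)
    (hJ : ρ ^ 2 * I0 ≤ (1 + sV + sb ^ 2) * (Real.exp (2 * Λ) * (1 + a) * J))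
    (hmain : t ≤ 9 → I0 ≤ Real.exp ((Λ * sb ^ 2 + 2 * sV) * t) * (h
              + a / ρ ^ 2 * Real.exp (-(κ * (ρ ^ 2 / t))) * J))
    (hT : t ≤ ρ ^ 2 / (2 * N * Real.log (2 * N * (1 + sV + sb ^ 2) ^ 2 * (J / (ρ ^ 2 * I0)))
                  + 5 * N ^ 2 * (Real.sqrt sV + sb + 1))) :
    I0 ≤ N * Real.exp (Real.sqrt sV + sb) * h := by
  set S := 1 + sV + sb ^ 2 with hS
  have hS1 : 1 ≤ S := by nlinarith [sq_nonneg sb]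
  have hS0 : 0 < S := by linarith
  set m := Real.sqrt sV + sb with hm
  have hq0 : 0 ≤ Real.sqrt sV := Real.sqrt_nonneg _
  have hq2 : Real.sqrt sV ^ 2 = sV := Real.sq_sqrt hsV
  have hm0 : 0 ≤ m := by positivity
  have hE : 0 < Real.exp (2 * Λ) * (1 + a) := by positivity
  have hκi : 0 < 1 / κ := by positivity
  have hN2 : 2 ≤ N := by rw [hN]; linarith
  have hNΛ : Λ ≤ N := by rw [hN]; linarith
  have hNE : Real.exp (2 * Λ) * (1 + a) ≤ N := by rw [hN]; linarith
  have hNa : a ≤ N := by rw [hN]; linarith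
  have hNκ : 1 ≤ κ * N := by
    have : 1 / κ ≤ N := by rw [hN]; linarith
    rw [div_le_iff₀ hκ] at this; linarith
  have hN0 : 0 < N := by linarith
  have hρI : 0 < ρ ^ 2 * I0 := by positivity
  have hJ0 : 0 < J := by
    by_contra hneg
    have : S * (Real.exp (2 * Λ) * (1 + a) * J) ≤ 0 :=
      mul_nonpos_of_nonneg_of_nonpos hS0.le (mul_nonpos_of_nonneg_of_nonpos hE.le (not_lt.1 hneg))
    linarith
  set X := 2 * N * S ^ 2 * (J / (ρ ^ 2 * I0)) with hX
  have hX0 : 0 < X := by positivity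
  have hX1 : 1 ≤ X := by
    have h1 : X = (2 * N * S ^ 2 * J) / (ρ ^ 2 * I0) := by rw [hX]; ring
    rw [h1, one_le_div hρI]
    refine hJ.trans ?_
    have h2 : Real.exp (2 * Λ) * (1 + a) * J ≤ N * J := mul_le_mul_of_nonneg_right hNE hJ0.le
    have h3 := mul_le_mul_of_nonneg_left h2 hS0.le
    have h4 : 0 < N * J := by positivity
    have h5 : S * (N * J) ≤ 2 * S ^ 2 * (N * J) :=
      mul_le_mul_of_nonneg_right (by nlinarith) h4.le
    linarith
  have hL : 0 ≤ Real.log X := Real.log_nonneg hX1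
  set L := Real.log X with hLdef
  set D := 2 * N * L + 5 * N ^ 2 * (m + 1) with hD
  have hD1 : 5 * N ^ 2 * (m + 1) ≤ D := by
    have : 0 ≤ 2 * N * L := by positivity
    linarith
  have hD0 : 0 < D := lt_of_lt_of_le (by positivity) hD1
  have htD : t * D ≤ ρ ^ 2 := (le_div_iff₀ hD0).1 hT
  have hρ2 : ρ ^ 2 ≤ 1 := pow_le_one₀ hρ.le hρ1
  have htD1 : t * (5 * N ^ 2 * (m + 1)) ≤ 1 :=
    (mul_le_mul_of_nonneg_left hD1 ht.le).trans (htD.trans hρ2)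
  have hN4 : 4 ≤ N ^ 2 := by
    have : (2 : ℝ) ^ 2 ≤ N ^ 2 := pow_le_pow_left₀ (by norm_num) hN2 2
    linarith
  have ht9 : t ≤ 9 := by
    have : 1 ≤ 5 * N ^ 2 * (m + 1) :=
      one_le_mul_of_one_le_of_one_le (by linarith) (by linarith)
    have := (le_mul_of_one_le_right ht.le this).trans htD1
    linarith
  have hc : (Λ * sb ^ 2 + 2 * sV) * t ≤ m := by
    have h1 : Λ * sb ^ 2 + 2 * sV ≤ 2 * Λ * (m * (m + 1)) := by
      have : sb ^ 2 + sV ≤ m * (m + 1) := by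
        have k0 : m * (m + 1) = Real.sqrt sV ^ 2 + sb ^ 2 + 2 * (Real.sqrt sV * sb) + m := by
          rw [hm]; ring
        have k1 := mul_nonneg hq0 hsb
        linarith
      have k1 := mul_le_mul_of_nonneg_left this (by linarith : 0 ≤ Λ)
      have k2 : 0 ≤ Λ * sb ^ 2 := mul_nonneg (by linarith) (sq_nonneg sb)
      have k3 : 1 * sV ≤ Λ * sV := mul_le_mul_of_nonneg_right hΛ hsV
      linarith
    have h2 : 2 * Λ ≤ 5 * N ^ 2 := by
      have : 2 * N ≤ N * N := mul_le_mul_of_nonneg_right hN2 hN0.le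
      have : 0 ≤ N ^ 2 := sq_nonneg N
      have : N ^ 2 = N * N := sq N
      linarith
    calc _ ≤ 2 * Λ * (m * (m + 1)) * t := mul_le_mul_of_nonneg_right h1 ht.le
      _ ≤ 5 * N ^ 2 * (m * (m + 1)) * t := by gcongr
      _ = m * (t * (5 * N ^ 2 * (m + 1))) := by ring
      _ ≤ m * 1 := mul_le_mul_of_nonneg_left htD1 hm0
      _ = m := mul_one m
  have hexp : L + m ≤ κ * (ρ ^ 2 / t) := by
    have h1 : D ≤ ρ ^ 2 / t := (le_div_iff₀ ht).2 (by linarith)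
    refine le_trans ?_ (mul_le_mul_of_nonneg_left h1 hκ.le)
    have h2 : L ≤ (κ * N) * (2 * L) := by
      have := mul_le_mul_of_nonneg_right hNκ (by linarith : 0 ≤ 2 * L)
      linarith
    have h3 : m ≤ (κ * N) * (5 * N * (m + 1)) := by
      have : m ≤ 5 * N * (m + 1) := by
        have := mul_le_mul_of_nonneg_right hN2 (by linarith : 0 ≤ m + 1)
        linarith
      have h0 : 0 ≤ 5 * N * (m + 1) := by positivity
      have := mul_le_mul_of_nonneg_right hNκ h0
      linarith
    have : κ * D = (κ * N) * (2 * L) + (κ * N) * (5 * N * (m + 1)) := by rw [hD]; ring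
    linarith
  have hexp2 : Real.exp (-(κ * (ρ ^ 2 / t))) ≤ X⁻¹ * Real.exp (-m) := by
    have : X⁻¹ * Real.exp (-m) = Real.exp (-(L + m)) := by
      rw [neg_add L m, Real.exp_add (-L) (-m), Real.exp_neg L, hLdef, Real.exp_log hX0]
    rw [this]
    exact Real.exp_le_exp.2 (by linarith)
  have hsecond : a / ρ ^ 2 * Real.exp (-(κ * (ρ ^ 2 / t))) * J ≤ I0 / 2 * Real.exp (-m) := by
    calc _ ≤ a / ρ ^ 2 * (X⁻¹ * Real.exp (-m)) * J := by gcongr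
      _ = (a / (N * S ^ 2)) * (I0 / 2 * Real.exp (-m)) := by rw [hX]; field_simp
      _ ≤ 1 * (I0 / 2 * Real.exp (-m)) := by
        refine mul_le_mul_of_nonneg_right ?_ (by positivity)
        rw [div_le_one (by positivity)]
        have := mul_le_mul_of_nonneg_left (one_le_pow₀ hS1 : 1 ≤ S ^ 2) hN0.le
        linarith
      _ = _ := one_mul _
  have hfin : I0 ≤ Real.exp m * (h + I0 / 2 * Real.exp (-m)) := by
    refine (hmain ht9).trans (mul_le_mul (Real.exp_le_exp.2 hc) (by linarith) (by positivity)
      (Real.exp_pos _).le)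
  have he : Real.exp m * (h + I0 / 2 * Real.exp (-m)) = Real.exp m * h + I0 / 2 := by
    rw [Real.exp_neg]; field_simp
  rw [he] at hfin
  have h2 : 2 * (Real.exp m * h) ≤ N * (Real.exp m * h) :=
    mul_le_mul_of_nonneg_right hN2 (by positivity)
  linarith

/-- Lemma `mon` of the paper, monotonicity in time: if `u` solves
`u_t + div(A∇u) + ⟨b,∇u⟩ + Vu = 0` in `Q₄`, there is `N > 1`, depending only on
`n, Λ, M`, such that for every `ρ ∈ (0,1]` and every
`0 < t ≤ T_{ρ,N} = ρ²/(2N log(2N(1+‖V‖_∞+‖b‖_∞²)²Θ_ρ) + 5N²(‖V‖_∞^{1/2}+‖b‖_∞+1))`,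
where `Θ_ρ = (∫_{Q₃}u²)/(ρ²∫_{B_ρ}u(·,0)²)`, one has
`N e^{‖V‖_∞^{1/2}+‖b‖_∞} ∫_{B_{2ρ}} u(·,t)² ≥ ∫_{B_ρ} u(·,0)²`.
Here `sV, sb` bound the sup norms of `V` and `b` on `Q₄`. -/
theorem monotonicity_in_time (n : ℕ) (Λ M : ℝ) (hΛ : 1 ≤ Λ) (hM : 0 ≤ M) :
    ∃ N : ℝ, 1 < N ∧
      ∀ (A : En n → ℝ → Matrix (Fin n) (Fin n) ℝ) (b : En n → ℝ → En n)
        (V : En n → ℝ → ℝ) (u : En n → ℝ → ℝ) (sV sb : ℝ),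
        Elliptic A Λ → ParLipschitz A M →
        SupBound V sV → SupBoundVec b sb →
        ContDiffOn ℝ 2 (Function.uncurry u) (Qcyl n 4) →
        (∀ x ∈ ball (0 : En n) 4, ∀ t ∈ Ioo (0 : ℝ) 16, Lop A b V u x t = 0) →
        ∀ ρ : ℝ, 0 < ρ → ρ ≤ 1 →
          ∀ t : ℝ, 0 < t →
            t ≤ ρ ^ 2 / (2 * N * Real.log (2 * N * (1 + sV + sb ^ 2) ^ 2 *
                    ((∫ p in Qcyl n 3, u p.1 p.2 ^ 2) /
                      (ρ ^ 2 * ∫ x in ball (0 : En n) ρ, u x 0 ^ 2)))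
                  + 5 * N ^ 2 * (Real.sqrt sV + sb + 1)) →
            (∫ x in ball (0 : En n) ρ, u x 0 ^ 2) ≤
              N * Real.exp (Real.sqrt sV + sb) *
                ∫ x in ball (0 : En n) (2 * ρ), u x t ^ 2 := by
  obtain ⟨κ, a, hκ, ha, H⟩ := aux_main n Λ M hΛ hM
  have hE : 0 < Real.exp (2 * Λ) * (1 + a) := by positivity
  have hκi : 0 < 1 / κ := by positivity
  refine ⟨2 + Λ + Real.exp (2 * Λ) * (1 + a) + a + 1 / κ, by linarith, ?_⟩
  intro A b V u sV sb hell hlip hV hb hu heq ρ hρ hρ1 t ht hT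
  have hsV : 0 ≤ sV := (abs_nonneg _).trans (hV 0 (by simp) 0 (by simp))
  have hsb : 0 ≤ sb := (norm_nonneg _).trans (hb 0 (by simp) 0 (by simp))
  obtain ⟨h1, h2⟩ := H A b V u sV sb hsV hsb hell hlip hV hb hu heq ρ hρ hρ1
  have hh : 0 ≤ ∫ x in ball (0 : En n) (2 * ρ), u x t ^ 2 := integral_nonneg fun x => sq_nonneg _
  have hI : 0 ≤ ∫ x in ball (0 : En n) ρ, u x 0 ^ 2 := integral_nonneg fun x => sq_nonneg _
  rcases hI.eq_or_lt with h0 | h0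
  · rw [← h0]; positivity
  · exact aux_final hκ ha hΛ rfl hsV hsb hρ hρ1 h0 ht hh h2 (h1 t ht) hT
end
end

section
/- Let θ(t) = t^{1/2}(log(1/t))^{3/2} and let σ be defined by σ(t) = t·exp(−∫₀^{λt} (1 − exp(−∫₀^s θ(τ) dτ/τ)) ds/s). For given α > 1 and δ ∈ (0,1) let λ = α/δ². Then there is a constant N > 0, depending only on n, such that for all w ∈ C_0^∞(ℝⁿ × [0, 1/(2λ))) the following two inequalities hold: (1) ∫_{ℝⁿ×[0,1/(2λ))} σ^{−2α} (|x|/t + |x|³/(α t²)) w² G dX ≤ N·e^{2αN}·λ^{2α+N} ∫_{ℝⁿ×[0,1/(2λ))} w² dX + N·δ ∫_{ℝⁿ×[0,1/(2λ))} σ^{−2α} (θ(λt)/t) w² G dX; and (2) ∫_{ℝⁿ×[0,1/(2λ))} σ^{−2α+1} (|x|/t + |x|³/(α t²) + |x|²/(δ t)) |∇w|² G dX ≤ N·e^{2αN}·λ^{2α+N} ∫_{ℝⁿ×[0,1/(2λ))} t|∇w|² dX + N·δ ∫_{ℝⁿ×[0,1/(2λ))} σ^{−2α+1} (θ(λt)/t)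 |∇w|² G dX. -/
open MeasureTheory Metric Set Real

noncomputable section

/-- `θ(t) = t^{1/2} (log(1/t))^{3/2}`. -/
def thetaFun (t : ℝ) : ℝ := Real.sqrt t * Real.log (1 / t) ^ ((3 : ℝ) / 2)

/-- `σ(t) = t · exp(−∫₀^{λt} (1 − exp(−∫₀^s θ(τ) dτ/τ)) ds/s)`. -/
def sigmaFun (l : ℝ) (t : ℝ) : ℝ :=
  t * Real.exp (-∫ s in (0 : ℝ)..(l * t),
      (1 - Real.exp (-∫ τ in (0 : ℝ)..s, thetaFun τ / τ)) / s)

/-- The Gaussian kernel `G(x,t) = t^{−n/2} e^{−|x|²/4t}`. -/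
def Gfun (n : ℕ) (x : En n) (t : ℝ) : ℝ :=
  t ^ (-(n : ℝ) / 2) * Real.exp (-‖x‖ ^ 2 / (4 * t))


lemma theta_nonneg {u : ℝ} (h0 : 0 < u) (h1 : u ≤ 1) : 0 ≤ thetaFun u := by
  unfold thetaFun
  have : 0 ≤ Real.log (1 / u) := Real.log_nonneg (by rw [le_div_iff₀ h0]; linarith)
  positivity

lemma theta_bound {ε : ℝ} (hε : 0 < ε) : ∃ C : ℝ, 0 < C ∧ ∀ u : ℝ, 0 < u → u ≤ 1 →
    thetaFun u ≤ C * u ^ (1 / 2 - ε) := by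
  refine ⟨(1 / (2 / 3 * ε)) ^ ((3 : ℝ) / 2), by positivity, fun u h0 h1 => ?_⟩
  unfold thetaFun
  have hl : 0 ≤ Real.log (1 / u) := Real.log_nonneg (by rw [le_div_iff₀ h0]; linarith)
  have h := Real.log_le_rpow_div (x := 1 / u) (by positivity) (ε := 2 / 3 * ε) (by positivity)
  have h2 := Real.rpow_le_rpow hl h (z := 3 / 2) (by norm_num)
  have h3 : ((1 / u) ^ (2 / 3 * ε) / (2 / 3 * ε)) ^ ((3 : ℝ) / 2)
      = (1 / (2 / 3 * ε)) ^ ((3 : ℝ) / 2) * u ^ (-ε) := by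
    rw [div_eq_mul_one_div, Real.mul_rpow (by positivity) (by positivity), ← Real.rpow_mul (by positivity),
      one_div u, Real.inv_rpow h0.le, ← Real.rpow_neg h0.le, mul_comm]
    congr 2; ring
  rw [h3] at h2
  calc √u * Real.log (1 / u) ^ ((3 : ℝ) / 2) ≤ √u * ((1 / (2 / 3 * ε)) ^ ((3 : ℝ) / 2) * u ^ (-ε)) := by gcongr
    _ = _ := by
      rw [Real.sqrt_eq_rpow, sub_eq_add_neg, Real.rpow_add h0]; ring

lemma theta_meas : Measurable thetaFun := by
  unfold thetaFun
  fun_prop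

lemma thetadiv_bound : ∃ C : ℝ, 0 < C ∧ ∀ u : ℝ, 0 < u → u ≤ 1 →
    thetaFun u / u ≤ C * u ^ (-(3 / 4) : ℝ) := by
  obtain ⟨C, hC, h⟩ := theta_bound (ε := 1 / 4) (by norm_num)
  refine ⟨C, hC, fun u h0 h1 => ?_⟩
  rw [div_le_iff₀ h0]
  refine (h u h0 h1).trans_eq ?_
  nth_rw 3 [← Real.rpow_one u]
  rw [mul_assoc, ← Real.rpow_add h0]
  norm_num

/-- the inner integral -/
def Iin (s : ℝ) : ℝ := ∫ τ in (0 : ℝ)..s, thetaFun τ / τ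

lemma int_rpow34 (s : ℝ) : ∫ τ in (0:ℝ)..s, τ ^ (-(3 / 4) : ℝ) = 4 * s ^ (1 / 4 : ℝ) := by
  rw [integral_rpow (by left; norm_num)]
  norm_num [Real.zero_rpow]
  ring

lemma Iin_bound : ∃ C : ℝ, 0 < C ∧ ∀ s : ℝ, 0 ≤ s → s ≤ 1 →
    0 ≤ Iin s ∧ Iin s ≤ C * s ^ (1 / 4 : ℝ) := by
  obtain ⟨C, hC, h⟩ := thetadiv_bound
  refine ⟨4 * C, by positivity, fun s h0 h1 => ⟨?_, ?_⟩⟩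
  · apply intervalIntegral.integral_nonneg_of_ae_restrict h0
    rw [Filter.EventuallyLE]
    filter_upwards [ae_restrict_mem measurableSet_Icc] with u hu
    rcases hu.1.eq_or_lt with h | h
    · simp [← h]
    · exact div_nonneg (theta_nonneg h (hu.2.trans h1)) h.le
  · have := intervalIntegral.norm_integral_le_of_norm_le (μ := volume) (f := fun τ => thetaFun τ / τ)
      (g := fun τ => C * τ ^ (-(3 / 4) : ℝ)) h0 (Filter.Eventually.of_forall fun u hu => by
        rw [Real.norm_of_nonneg (div_nonneg (theta_nonneg hu.1 (hu.2.trans h1)) hu.1.le)]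
        exact h u hu.1 (hu.2.trans h1))
        ((intervalIntegral.intervalIntegrable_rpow' (by norm_num)).const_mul C)
    rw [intervalIntegral.integral_const_mul, int_rpow34 s] at this
    unfold Iin
    refine (le_abs_self _).trans (this.trans_eq (by ring))

/-- integrand of the outer integral -/
def fout (s : ℝ) : ℝ := (1 - Real.exp (-Iin s)) / s

lemma fout_bound : ∃ C : ℝ, 0 < C ∧ ∀ s : ℝ, 0 < s → s ≤ 1 →
    0 ≤ fout s ∧ fout s ≤ C * s ^ (-(3 / 4) : ℝ) := by
  obtain ⟨C, hC, h⟩ := Iin_bound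
  refine ⟨C, hC, fun s h0 h1 => ?_⟩
  obtain ⟨ha, hb⟩ := h s h0.le h1
  unfold fout
  constructor
  · apply div_nonneg _ h0.le
    have := Real.exp_le_one_iff.2 (neg_nonpos.2 ha)
    linarith
  · rw [div_le_iff₀ h0]
    have := Real.add_one_le_exp (-Iin s)
    refine (show _ ≤ Iin s by linarith).trans (hb.trans_eq ?_)
    nth_rw 3 [← Real.rpow_one s]
    rw [mul_assoc, ← Real.rpow_add h0]
    norm_num

lemma Iin_cont : ContinuousOn Iin (Icc 0 1) := by
  have : IntegrableOn (fun τ => thetaFun τ / τ) (Icc 0 1) := by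
    obtain ⟨C, hC, h⟩ := thetadiv_bound
    have h1 : IntervalIntegrable (fun τ : ℝ => C * τ ^ (-(3 / 4) : ℝ)) volume 0 1 :=
      (intervalIntegral.intervalIntegrable_rpow' (by norm_num)).const_mul C
    rw [intervalIntegrable_iff_integrableOn_Ioc_of_le zero_le_one] at h1
    rw [integrableOn_Icc_iff_integrableOn_Ioc]
    refine Integrable.mono' h1 (theta_meas.div measurable_id).aestronglyMeasurable ?_
    filter_upwards [ae_restrict_mem measurableSet_Ioc] with u hu
    rw [Real.norm_of_nonneg (div_nonneg (theta_nonneg hu.1 hu.2) hu.1.le)]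
    exact h u hu.1 hu.2
  have := intervalIntegral.continuousOn_primitive_interval (μ := volume) (f := fun τ => thetaFun τ / τ) (a := 0) (b := 1)
    (by rwa [uIcc_of_le zero_le_one])
  rwa [uIcc_of_le zero_le_one] at this

lemma fout_int : IntegrableOn fout (Icc 0 1) := by
  obtain ⟨C, hC, h⟩ := fout_bound
  have h1 : IntervalIntegrable (fun τ : ℝ => C * τ ^ (-(3 / 4) : ℝ)) volume 0 1 :=
    (intervalIntegral.intervalIntegrable_rpow' (by norm_num)).const_mul C
  rw [intervalIntegrable_iff_integrableOn_Ioc_of_le zero_le_one] at h1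
  rw [integrableOn_Icc_iff_integrableOn_Ioc]
  have hc : ContinuousOn fout (Ioc 0 1) := by
    unfold fout
    refine ContinuousOn.div ?_ continuousOn_id (fun x hx => hx.1.ne')
    have := Iin_cont.mono Ioc_subset_Icc_self
    fun_prop
  refine Integrable.mono' h1 (hc.aestronglyMeasurable measurableSet_Ioc) ?_
  filter_upwards [ae_restrict_mem measurableSet_Ioc] with u hu
  rw [Real.norm_of_nonneg (h u hu.1 hu.2).1]
  exact (h u hu.1 hu.2).2

lemma sigma_eq (l t : ℝ) : sigmaFun l t = t * Real.exp (-∫ s in (0 : ℝ)..(l * t), fout s) := rfl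

lemma sigma_cont {l : ℝ} (hl : 0 < l) : ContinuousOn (sigmaFun l) (Ioo 0 (1 / (2 * l))) := by
  have h := intervalIntegral.continuousOn_primitive_interval (μ := volume) (f := fout) (a := 0) (b := 1)
    (by rw [uIcc_of_le zero_le_one]; exact fout_int)
  rw [uIcc_of_le zero_le_one] at h
  have h2 : ContinuousOn (fun t => ∫ s in (0 : ℝ)..(l * t), fout s) (Ioo 0 (1 / (2 * l))) := by
    refine h.comp (f := fun t => l * t) (by fun_prop) fun t ht => ?_
    have := ht.2
    rw [lt_div_iff₀ (by positivity)] at this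
    exact ⟨mul_nonneg hl.le ht.1.le, by nlinarith⟩
  simp only [funext (sigma_eq l)]
  fun_prop

lemma sigma_bound : ∃ N : ℝ, 0 < N ∧ ∀ l t : ℝ, 0 < l → 0 < t → t < 1 / (2 * l) →
    t * Real.exp (-N) ≤ sigmaFun l t ∧ sigmaFun l t ≤ t := by
  obtain ⟨C, hC, h⟩ := fout_bound
  refine ⟨4 * C, by positivity, fun l t hl h0 h1 => ?_⟩
  rw [lt_div_iff₀ (by positivity)] at h1
  have hlt : 0 < l * t := by positivity
  have hlt1 : l * t ≤ 1 := by nlinarith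
  have a1 : 0 ≤ ∫ s in (0 : ℝ)..(l * t), fout s := by
    apply intervalIntegral.integral_nonneg_of_ae_restrict hlt.le
    rw [Filter.EventuallyLE]
    filter_upwards [ae_restrict_mem measurableSet_Icc] with u hu
    rcases hu.1.eq_or_lt with h' | h'
    · simp [← h', fout]
    · exact (h u h' (hu.2.trans hlt1)).1
  have a2 : ∫ s in (0 : ℝ)..(l * t), fout s ≤ 4 * C := by
    have := intervalIntegral.norm_integral_le_of_norm_le (μ := volume) (f := fout)
      (g := fun τ => C * τ ^ (-(3 / 4) : ℝ)) hlt.le (Filter.Eventually.of_forall fun u hu => by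
        rw [Real.norm_of_nonneg (h u hu.1 (hu.2.trans hlt1)).1]
        exact (h u hu.1 (hu.2.trans hlt1)).2)
        ((intervalIntegral.intervalIntegrable_rpow' (by norm_num)).const_mul C)
    rw [intervalIntegral.integral_const_mul, int_rpow34] at this
    refine (le_abs_self _).trans (this.trans ?_)
    have := Real.rpow_le_one hlt.le hlt1 (z := 1 / 4) (by norm_num)
    nlinarith
  rw [sigma_eq]
  constructor
  · gcongr
  · have := Real.exp_le_one_iff.2 (neg_nonpos.2 a1)
    nlinarith

lemma caseA {k α δ l t r : ℝ} (hk : 0 < k) (hα : 1 < α) (hδ : 0 < δ)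
    (hl : l = α / δ ^ 2) (ht : 0 < t) (ht1 : t < 1 / (2 * l)) (hr0 : 0 ≤ r)
    (hr : r ≤ k * (√α * √t * √(Real.log (1 / (l * t))))) :
    r / t + r ^ 3 / (α * t ^ 2) + r ^ 2 / (δ * t) ≤
      (2 * k + k ^ 3 + k ^ 2) * (δ * (thetaFun (l * t) / t)) := by
  have hl0 : 0 < l := by rw [hl]; positivity
  rw [lt_div_iff₀ (by positivity)] at ht1
  have hlt : l * t ≤ 1 / 2 := by nlinarith
  have hlt0 : 0 < l * t := by positivity
  have hL : 1 / 2 ≤ Real.log (1 / (l * t)) := by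
    have h2 : Real.log 2 ≤ Real.log (1 / (l * t)) := by
      apply Real.log_le_log (by norm_num)
      rw [le_div_iff₀ hlt0]; linarith
    have := Real.log_two_gt_d9
    linarith
  unfold thetaFun
  set L := Real.log (1 / (l * t)) with hLdef
  have hL0 : 0 ≤ L := by linarith
  have hm3 : L ^ ((3 : ℝ) / 2) = √L ^ 3 := by
    rw [Real.sqrt_eq_rpow, ← Real.rpow_natCast, ← Real.rpow_mul hL0]; norm_num
  have ha2 : √α ^ 2 = α := Real.sq_sqrt (by linarith)
  have hτ2 : √t ^ 2 = t := Real.sq_sqrt ht.le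
  have hm2 : √L ^ 2 = L := Real.sq_sqrt hL0
  have hslt : √(l * t) = √α * √t / δ := by
    rw [hl, Real.sqrt_mul (by positivity), Real.sqrt_div (by linarith), Real.sqrt_sq hδ.le]; ring
  have hsm : √α * √t / δ ≤ √L := by
    rw [← hslt]; exact Real.sqrt_le_sqrt (by linarith)
  have ha0 : 0 < √α := Real.sqrt_pos.2 (by linarith)
  have hτ0 : 0 < √t := Real.sqrt_pos.2 ht
  have hm0 : 0 ≤ √L := Real.sqrt_nonneg _
  rw [hm3, hslt]
  generalize √L = m at *
  generalize √t = τ at *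
  generalize √α = a at *
  have e : δ * (a * τ / δ * m ^ 3 / t) = a * m ^ 3 / τ := by
    rw [← hτ2]; field_simp
  rw [e]
  have h1 : r / t ≤ 2 * k * (a * m ^ 3 / τ) := by
    rw [← hτ2, div_le_iff₀ (by positivity)]
    have : 2 * k * (a * m ^ 3 / τ) * τ ^ 2 = k * (a * τ * m) * (2 * m ^ 2) := by
      field_simp
    rw [this]
    have h0 : 0 ≤ k * (a * τ * m) := by positivity
    nlinarith
  have h2 : r ^ 3 / (α * t ^ 2) ≤ k ^ 3 * (a * m ^ 3 / τ) := by
    rw [← hτ2, ← ha2, div_le_iff₀ (by positivity)]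
    have : k ^ 3 * (a * m ^ 3 / τ) * (a ^ 2 * (τ ^ 2) ^ 2) = (k * (a * τ * m)) ^ 3 := by
      field_simp
    rw [this]
    gcongr
  have h3 : r ^ 2 / (δ * t) ≤ k ^ 2 * (a * m ^ 3 / τ) := by
    rw [← hτ2, div_le_iff₀ (by positivity)]
    calc r ^ 2 ≤ (k * (a * τ * m)) ^ 2 := by gcongr
      _ = k ^ 2 * a * τ * m ^ 2 * δ * (a * τ / δ) := by field_simp
      _ ≤ k ^ 2 * a * τ * m ^ 2 * δ * m := by gcongr
      _ = _ := by field_simp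
  linarith

lemma caseB {n : ℕ} {k α δ l t : ℝ} (hk : k = 4 * n + 20) (hα : 1 < α) (hδ : 0 < δ)
    (hl : l = α / δ ^ 2) (ht : 0 < t) (ht1 : t < 1 / (2 * l)) (x : En n)
    (hr : k * (√α * √t * √(Real.log (1 / (l * t)))) ≤ ‖x‖) :
    t ^ (-(2 * α)) * (‖x‖ / t + ‖x‖ ^ 3 / (α * t ^ 2) + ‖x‖ ^ 2 / (δ * t)) * Gfun n x t ≤
      64 * l ^ (2 * α + n / 2 + 1 / 2 : ℝ) := by
  have hl0 : 0 < l := by rw [hl]; positivity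
  rw [lt_div_iff₀ (by positivity)] at ht1
  have hlt : l * t ≤ 1 / 2 := by nlinarith
  have hlt0 : 0 < l * t := by positivity
  have hL : 0 ≤ Real.log (1 / (l * t)) := Real.log_nonneg (by rw [le_div_iff₀ hlt0]; linarith)
  have hτ0 : 0 < √t := Real.sqrt_pos.2 ht
  have hτ2 : √t ^ 2 = t := Real.sq_sqrt ht.le
  set ρ := ‖x‖ / √t with hρ
  have hx : ‖x‖ = ρ * √t := by rw [hρ]; field_simp
  have hρ0 : 0 ≤ ρ := by positivity
  have hδτ : √t ≤ δ := by
    apply Real.sqrt_le_left hδ.le |>.2 _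
    have : l * δ ^ 2 = α := by rw [hl]; field_simp
    have h3 : l * t ≤ l * δ ^ 2 := by linarith
    exact le_of_mul_le_mul_left h3 hl0
  have hk0 : 0 ≤ k := by rw [hk]; positivity
  have hρk : k * (√α * √(Real.log (1 / (l * t)))) ≤ ρ := by
    rw [hρ, le_div_iff₀ hτ0]; linarith
  have hρ2 : k ^ 2 * (α * Real.log (1 / (l * t))) ≤ ρ ^ 2 := by
    calc _ = (k * (√α * √(Real.log (1 / (l * t))))) ^ 2 := by
          rw [mul_pow, mul_pow, Real.sq_sqrt (by linarith), Real.sq_sqrt hL]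
      _ ≤ _ := by gcongr
  have hW : ‖x‖ / t + ‖x‖ ^ 3 / (α * t ^ 2) + ‖x‖ ^ 2 / (δ * t) ≤ (ρ + ρ ^ 2 + ρ ^ 3) * t ^ (-(1 / 2) : ℝ) := by
    have e : t ^ (-(1 / 2) : ℝ) = (√t)⁻¹ := by
      rw [Real.rpow_neg ht.le, Real.sqrt_eq_rpow]
    rw [e, hx]
    have a1 : ρ * √t / t = ρ * (√t)⁻¹ := by
      nth_rw 2 [← hτ2]; field_simp
    have a2 : (ρ * √t) ^ 3 / (α * t ^ 2) ≤ ρ ^ 3 * (√t)⁻¹ := by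
      have : (ρ * √t) ^ 3 / (α * t ^ 2) = ρ ^ 3 * (√t)⁻¹ * α⁻¹ := by
        nth_rw 2 [← hτ2]; field_simp
      rw [this]
      exact mul_le_of_le_one_right (by positivity) (inv_le_one_of_one_le₀ hα.le)
    have a3 : (ρ * √t) ^ 2 / (δ * t) ≤ ρ ^ 2 * (√t)⁻¹ := by
      have : (ρ * √t) ^ 2 / (δ * t) = ρ ^ 2 * δ⁻¹ := by
        nth_rw 2 [← hτ2]; field_simp
      rw [this]
      gcongr
    linarith
  have hP : (ρ + ρ ^ 2 + ρ ^ 3) ≤ 64 * Real.exp (ρ ^ 2 / 8) := by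
    have := Real.quadratic_le_exp_of_nonneg (x := ρ ^ 2 / 8) (by positivity)
    nlinarith [sq_nonneg (ρ - 1), mul_nonneg hρ0 (sq_nonneg (ρ - 1)), sq_nonneg (ρ ^ 2 - ρ), sq_nonneg (ρ ^ 2)]
  have hE : Real.exp (-(ρ ^ 2 / 8)) ≤ (l * t) ^ (2 * α + n / 2 + 1 / 2 : ℝ) := by
    rw [Real.rpow_def_of_pos hlt0]
    apply Real.exp_le_exp.2
    have : Real.log (l * t) = - Real.log (1 / (l * t)) := by rw [one_div, Real.log_inv]; ring
    rw [this]
    generalize Real.log (1 / (l * t)) = L at *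
    have hkk : 2 * α + n / 2 + 1 / 2 ≤ k ^ 2 * α / 8 := by
      have hn0 : (0 : ℝ) ≤ n := Nat.cast_nonneg n
      have : 8 * (2 + (n : ℝ) / 2 + 1 / 2) ≤ k ^ 2 := by rw [hk]; nlinarith
      have h4 : (n : ℝ) / 2 + 1 / 2 ≤ (n / 2 + 1 / 2) * α := by
        apply le_mul_of_one_le_right (by positivity) hα.le
      nlinarith
    nlinarith [mul_le_mul_of_nonneg_left hkk hL]
  unfold Gfun
  have hexp : Real.exp (-‖x‖ ^ 2 / (4 * t)) = Real.exp (-(ρ ^ 2 / 8)) * Real.exp (-(ρ ^ 2 / 8)) := by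
    rw [← Real.exp_add, hx]; congr 1
    nth_rw 2 [← hτ2]; field_simp; ring
  rw [hexp]
  calc _ ≤ t ^ (-(2 * α)) * (64 * Real.exp (ρ ^ 2 / 8) * t ^ (-(1 / 2) : ℝ)) *
        (t ^ (-(n : ℝ) / 2) * (Real.exp (-(ρ ^ 2 / 8)) * (l * t) ^ (2 * α + n / 2 + 1 / 2 : ℝ))) := by
        gcongr
        exact hW.trans (by gcongr)
    _ = 64 * (Real.exp (ρ ^ 2 / 8) * Real.exp (-(ρ ^ 2 / 8))) * (t ^ (-(2 * α)) * t ^ (-(1 / 2) : ℝ) *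
        t ^ (-(n : ℝ) / 2) * t ^ (2 * α + n / 2 + 1 / 2 : ℝ)) * l ^ (2 * α + n / 2 + 1 / 2 : ℝ) := by
        rw [Real.mul_rpow hl0.le ht.le]; ring
    _ = _ := by
        rw [← Real.exp_add, ← Real.rpow_add ht, ← Real.rpow_add ht, ← Real.rpow_add ht]
        have : -(2 * α) + -(1 / 2) + -(n : ℝ) / 2 + (2 * α + n / 2 + 1 / 2) = 0 := by ring
        rw [this]; simp

lemma pointwise (n : ℕ) : ∃ N : ℝ, 0 < N ∧ ∀ α δ l t : ℝ, 1 < α → 0 < δ → δ < 1 → l = α / δ ^ 2 →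
    0 < t → t < 1 / (2 * l) → ∀ x : En n,
    sigmaFun l t ^ (-(2 * α)) * (‖x‖ / t + ‖x‖ ^ 3 / (α * t ^ 2) + ‖x‖ ^ 2 / (δ * t)) * Gfun n x t ≤
      N * Real.exp (2 * α * N) * l ^ (2 * α + N) +
      N * δ * (sigmaFun l t ^ (-(2 * α)) * (thetaFun (l * t) / t) * Gfun n x t) := by
  obtain ⟨N₀, hN₀, hσ⟩ := sigma_bound
  set k : ℝ := 4 * n + 20 with hk
  have hk0 : 0 < k := by positivity
  refine ⟨N₀ + (2 * k + k ^ 3 + k ^ 2) + 64 + n, by positivity, ?_⟩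
  intro α δ l t hα hδ hδ1 hl ht ht1 x
  set N := N₀ + (2 * k + k ^ 3 + k ^ 2) + 64 + n with hN
  have hl0 : 0 < l := by rw [hl]; positivity
  have hl1 : 1 ≤ l := by
    rw [hl, le_div_iff₀ (by positivity)]; nlinarith
  obtain ⟨hs1, hs2⟩ := hσ l t hl0 ht ht1
  have hs0 : 0 < sigmaFun l t := lt_of_lt_of_le (by positivity) hs1
  have hG : 0 ≤ Gfun n x t := by unfold Gfun; positivity
  have hθ : 0 ≤ thetaFun (l * t) := by
    apply theta_nonneg (by positivity)
    rw [lt_div_iff₀ (by positivity)] at ht1; nlinarith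
  have hkk : 0 < 2 * k + k ^ 3 + k ^ 2 := by positivity
  have hnn : (0 : ℝ) ≤ n := Nat.cast_nonneg n
  rcases le_total ‖x‖ (k * (√α * √t * √(Real.log (1 / (l * t))))) with h | h
  · have := caseA hk0 hα hδ hl ht ht1 (norm_nonneg x) h
    have h2 : 0 ≤ N * Real.exp (2 * α * N) * l ^ (2 * α + N) := by positivity
    calc _ ≤ sigmaFun l t ^ (-(2 * α)) * ((2 * k + k ^ 3 + k ^ 2) * (δ * (thetaFun (l * t) / t))) * Gfun n x t := by
          gcongr
      _ ≤ sigmaFun l t ^ (-(2 * α)) * (N * (δ * (thetaFun (l * t) / t))) * Gfun n x t := by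
          gcongr; linarith
      _ = N * δ * (sigmaFun l t ^ (-(2 * α)) * (thetaFun (l * t) / t) * Gfun n x t) := by ring
      _ ≤ _ := by linarith
  · have := caseB hk hα hδ hl ht ht1 x h
    have h2 : 0 ≤ N * δ * (sigmaFun l t ^ (-(2 * α)) * (thetaFun (l * t) / t) * Gfun n x t) := by positivity
    have hσ' : sigmaFun l t ^ (-(2 * α)) ≤ Real.exp (2 * α * N₀) * t ^ (-(2 * α)) := by
      have := Real.rpow_le_rpow_of_nonpos (z := -(2 * α)) (by positivity) hs1 (by linarith)
      refine this.trans_eq ?_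
      rw [Real.mul_rpow ht.le (Real.exp_pos _).le, ← Real.exp_mul, mul_comm]
      congr 2; ring
    calc _ ≤ (Real.exp (2 * α * N₀) * t ^ (-(2 * α))) * (‖x‖ / t + ‖x‖ ^ 3 / (α * t ^ 2) + ‖x‖ ^ 2 / (δ * t)) * Gfun n x t := by
          gcongr
      _ = Real.exp (2 * α * N₀) * (t ^ (-(2 * α)) * (‖x‖ / t + ‖x‖ ^ 3 / (α * t ^ 2) + ‖x‖ ^ 2 / (δ * t)) * Gfun n x t) := by ring
      _ ≤ Real.exp (2 * α * N₀) * (64 * l ^ (2 * α + n / 2 + 1 / 2 : ℝ)) := by gcongr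
      _ = 64 * Real.exp (2 * α * N₀) * l ^ (2 * α + n / 2 + 1 / 2 : ℝ) := by ring
      _ ≤ N * Real.exp (2 * α * N) * l ^ (2 * α + N) := by
          refine mul_le_mul ?_ (Real.rpow_le_rpow_of_exponent_le hl1 (by linarith)) (by positivity) (by positivity)
          gcongr
          · linarith
          · linarith
      _ ≤ _ := by linarith

section general
variable {F : Type*} [NormedAddCommGroup F] [NormedSpace ℝ F]

lemma tay {g : ℝ → F} (hg : ContDiff ℝ (⊤ : ℕ∞) g) (k : ℕ) {D : ℝ}
    (hD : ∀ s ∈ Icc (0 : ℝ) 1, ‖iteratedDeriv (k + 1) g s‖ ≤ D)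
    (h0 : ∀ j < k, iteratedDeriv j g 0 = 0) (s : ℝ) (hs : s ∈ Icc (0 : ℝ) 1) :
    ‖g s - ((k.factorial : ℝ)⁻¹ * s ^ k) • iteratedDeriv k g 0‖ ≤ D * s ^ (k + 1) := by
  have hu : UniqueDiffOn ℝ (Icc (0 : ℝ) 1) := uniqueDiffOn_Icc zero_lt_one
  have hcd : ∀ m : ℕ, ContDiff ℝ m g := fun m => hg.of_le (by exact_mod_cast le_top)
  have he : ∀ m : ℕ, ∀ x ∈ Icc (0 : ℝ) 1, iteratedDerivWithin m g (Icc 0 1) x = iteratedDeriv m g x :=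
    fun m x hx => iteratedDerivWithin_eq_iteratedDeriv hu (hcd m).contDiffAt hx
  have hD0 : 0 ≤ D := (norm_nonneg _).trans (hD 0 (by simp))
  have := taylor_mean_remainder_bound (f := g) (n := k) (C := D) zero_le_one
    (by exact_mod_cast (hcd (k + 1)).contDiffOn) hs (fun y hy => by rw [he _ y hy]; exact hD y hy)
  rw [taylor_within_apply, Finset.sum_range_succ, Finset.sum_eq_zero, zero_add, sub_zero,
    he k 0 (by simp)] at this
  · refine this.trans ?_
    apply div_le_self
    · have := hs.1
      positivity
    · exact_mod_cast Nat.one_le_iff_ne_zero.2 (Nat.factorial_ne_zero k)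
  · intro j hj
    rw [he j 0 (by simp), h0 j (Finset.mem_range.1 hj), smul_zero]

lemma vanish {g : ℝ → F} (hg : ContDiff ℝ (⊤ : ℕ∞) g) {b γ : ℝ} (hb : 0 < b) (m : ℕ) (hm : (m : ℝ) ≤ γ)
    (hint : IntegrableOn (fun t => t ^ (-γ) * ‖g √t‖ ^ 2) (Ioo 0 b)) :
    ∀ j < m, iteratedDeriv j g 0 = 0 := by
  intro j
  induction j using Nat.strong_induction_on with
  | _ j ih =>
  intro hj
  by_contra hne
  have hcont : Continuous (iteratedDeriv (j + 1) g) :=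
    hg.continuous_iteratedDeriv (j + 1) (by exact_mod_cast le_top)
  obtain ⟨D, hD⟩ := isCompact_Icc.exists_bound_of_continuousOn (s := Icc (0 : ℝ) 1) hcont.continuousOn
  have hD0 : 0 ≤ D := (norm_nonneg _).trans (hD 0 (by simp))
  have ht := tay hg j hD (fun i hi => ih i hi (hi.trans hj))
  set c : ℝ := (j.factorial : ℝ)⁻¹ * ‖iteratedDeriv j g 0‖ with hc
  have hc0 : 0 < c := by
    have := norm_pos_iff.2 hne
    positivity
  set s₀ : ℝ := min 1 (c / (2 * (D + 1))) with hs₀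
  have hs₀0 : 0 < s₀ := lt_min one_pos (by positivity)
  have hlow : ∀ s : ℝ, 0 ≤ s → s ≤ s₀ → c / 2 * s ^ j ≤ ‖g s‖ := by
    intro s h0 h1
    have h2 := ht s ⟨h0, h1.trans (min_le_left _ _)⟩
    have h3 : ‖((j.factorial : ℝ)⁻¹ * s ^ j) • iteratedDeriv j g 0‖ = c * s ^ j := by
      rw [norm_smul, Real.norm_of_nonneg (by positivity), hc]; ring
    have h4 := norm_sub_norm_le (((j.factorial : ℝ)⁻¹ * s ^ j) • iteratedDeriv j g 0) (g s)
    rw [norm_sub_rev, h3] at h4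
    have h5 : D * s ≤ c / 2 := by
      have : s ≤ c / (2 * (D + 1)) := h1.trans (min_le_right _ _)
      rw [le_div_iff₀ (by positivity)] at this
      nlinarith
    have h6 : D * s ^ (j + 1) ≤ c / 2 * s ^ j := by
      rw [pow_succ]
      have : 0 ≤ s ^ j := by positivity
      nlinarith
    linarith
  set ε := min b (s₀ ^ 2) with hε
  have hε0 : 0 < ε := lt_min hb (by positivity)
  have hI : IntegrableOn (fun t : ℝ => (c / 2) ^ 2 * t ^ ((j : ℝ) - γ)) (Ioo 0 ε) := by
    refine Integrable.mono' (hint.mono_set (Ioo_subset_Ioo_right (min_le_left _ _))) 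
      (by fun_prop) ?_
    filter_upwards [ae_restrict_mem measurableSet_Ioo] with t ht
    have ht0 := ht.1
    rw [Real.norm_of_nonneg (by positivity)]
    have hst : √t ≤ s₀ := by
      rw [Real.sqrt_le_left hs₀0.le]
      exact ht.2.le.trans (min_le_right _ _)
    have h1 := hlow √t (Real.sqrt_nonneg _) hst
    have h2 : (c / 2 * √t ^ j) ^ 2 ≤ ‖g √t‖ ^ 2 := by gcongr
    have h3 : (c / 2 * √t ^ j) ^ 2 = (c / 2) ^ 2 * t ^ j := by
      rw [mul_pow, ← pow_mul, mul_comm j 2, pow_mul, Real.sq_sqrt ht0.le]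
    rw [h3] at h2
    calc (c / 2) ^ 2 * t ^ ((j : ℝ) - γ) = t ^ (-γ) * ((c / 2) ^ 2 * t ^ j) := by
          rw [sub_eq_add_neg, Real.rpow_add ht0, Real.rpow_natCast]; ring
      _ ≤ _ := by gcongr
  have hI2 : IntegrableOn (fun t : ℝ => t ^ ((j : ℝ) - γ)) (Ioo 0 ε) := by
    have := hI.const_mul (((c / 2) ^ 2)⁻¹)
    refine this.congr (Filter.Eventually.of_forall fun t => ?_)
    simp only
    rw [← mul_assoc, inv_mul_cancel₀ (by positivity), one_mul]
  rw [intervalIntegral.integrableOn_Ioo_rpow_iff hε0] at hI2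
  have : (j : ℝ) + 1 ≤ m := by exact_mod_cast hj
  linarith

lemma curve_bound {n : ℕ} {V : En n × ℝ → F} (hV : ContDiff ℝ (⊤ : ℕ∞) V) (hc : HasCompactSupport V) (m : ℕ) :
    ∃ C : ℝ, 0 ≤ C ∧ ∀ y : En n, ∀ s ∈ Icc (0 : ℝ) 1,
      ‖iteratedDeriv m (fun s : ℝ => V (s • y, s ^ 2)) s‖ ≤ C * (‖y‖ + 2) ^ m := by
  have hb : ∀ i : ℕ, ∃ C, ∀ p, ‖iteratedFDeriv ℝ i V p‖ ≤ C := fun i =>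
    (hV.continuous_iteratedFDeriv (m := i) (by exact_mod_cast le_top)).bounded_above_of_compact_support
      (hc.iteratedFDeriv i)
  choose Cf hCf using hb
  have hCf0 : ∀ i, 0 ≤ Cf i := fun i => (norm_nonneg _).trans (hCf i 0)
  refine ⟨m.factorial * ∑ i ∈ Finset.range (m + 1), Cf i, ?_, fun y s hs => ?_⟩
  · exact mul_nonneg (by positivity) (Finset.sum_nonneg fun i _ => hCf0 i)
  have hf : ContDiff ℝ (⊤ : ℕ∞) (fun s : ℝ => ((s • y, s ^ 2) : En n × ℝ)) := by fun_prop
  have key := norm_iteratedFDeriv_comp_le (n := m) (N := (⊤ : ℕ∞)) hV hf (by exact_mod_cast le_top) s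
    (C := ∑ i ∈ Finset.range (m + 1), Cf i) (D := ‖y‖ + 2) ?_ ?_
  · rw [norm_iteratedFDeriv_eq_norm_iteratedDeriv] at key
    exact key
  · intro i hi
    exact (hCf i _).trans (Finset.single_le_sum (fun i _ => hCf0 i) (Finset.mem_range.2 (by omega)))
  · intro i h1 _
    rw [norm_iteratedFDeriv_eq_norm_iteratedDeriv]
    have d1 : deriv (fun s : ℝ => ((s • y, s ^ 2) : En n × ℝ)) = fun s => (y, 2 * s) := by
      ext1 s
      have h1 : HasDerivAt (fun s : ℝ => s • y) y s := by
        simpa using (hasDerivAt_id s).smul_const y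
      have h2 : HasDerivAt (fun s : ℝ => s ^ 2) (2 * s) s := by
        simpa using hasDerivAt_pow 2 s
      exact (h1.prodMk h2).deriv
    have d2 : deriv (fun s : ℝ => ((y, 2 * s) : En n × ℝ)) = fun s => (0, 2) := by
      ext1 s
      have h1 : HasDerivAt (fun s : ℝ => y) 0 s := hasDerivAt_const s y
      have h2 : HasDerivAt (fun s : ℝ => 2 * s) 2 s := by
        simpa using (hasDerivAt_id s).const_mul 2
      exact (h1.prodMk h2).deriv
    have hy := norm_nonneg y
    match i, h1 with
    | 1, _ =>
      rw [iteratedDeriv_one, d1, pow_one, Prod.norm_mk, Real.norm_of_nonneg (by linarith [hs.1])]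
      apply max_le <;> linarith [hs.2]
    | 2, _ =>
      rw [iteratedDeriv_succ', iteratedDeriv_one, d1, d2, Prod.norm_mk, norm_zero]
      simp only [Real.norm_ofNat]
      apply max_le <;> nlinarith
    | (k + 3), _ =>
      rw [iteratedDeriv_succ', iteratedDeriv_succ', iteratedDeriv_succ', d1, d2]
      simp
      positivity

lemma decay {n : ℕ} {V : En n × ℝ → F} (hV : ContDiff ℝ (⊤ : ℕ∞) V) (hc : HasCompactSupport V)
    {b γ : ℝ} (hb : 0 < b) (m : ℕ) (hm1 : 1 ≤ m) (hm : (m : ℝ) ≤ γ)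
    (hint : ∀ᵐ y : En n, IntegrableOn (fun t => t ^ (-γ) * ‖V (√t • y, t)‖ ^ 2) (Ioo 0 b)) :
    ∃ C : ℝ, 0 ≤ C ∧ ∀ᵐ y : En n, ∀ t : ℝ, 0 < t → t ≤ 1 →
      ‖V (√t • y, t)‖ ≤ C * (‖y‖ + 2) ^ m * √t ^ m := by
  obtain ⟨k, rfl⟩ : ∃ k, m = k + 1 := ⟨m - 1, by omega⟩
  obtain ⟨C, hC0, hC⟩ := curve_bound hV hc (k + 1)
  refine ⟨C, hC0, ?_⟩
  filter_upwards [hint] with y hy t ht ht1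
  have hg : ContDiff ℝ (⊤ : ℕ∞) (fun s : ℝ => V (s • y, s ^ 2)) := by fun_prop
  have hy' : IntegrableOn (fun t => t ^ (-γ) * ‖(fun s : ℝ => V (s • y, s ^ 2)) √t‖ ^ 2) (Ioo 0 b) := by
    refine hy.congr_fun (fun t ht => ?_) measurableSet_Ioo
    simp only [Real.sq_sqrt ht.1.le]
  have hv := vanish hg hb (k + 1) hm hy'
  have := tay hg k (hC y) (fun j hj => hv j (by omega)) √t
    ⟨Real.sqrt_nonneg _, Real.sqrt_le_one.2 ht1⟩
  rw [hv k (by omega), smul_zero, sub_zero, Real.sq_sqrt ht.le] at this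
  exact this

end general

section general2
variable {F : Type*} [NormedAddCommGroup F] [NormedSpace ℝ F]

lemma poly_gauss (n m : ℕ) :
    Integrable (fun y : En n => (‖y‖ + 2) ^ m * Real.exp (-‖y‖ ^ 2 / 4)) := by
  have h := (GaussianFourier.integrable_cexp_neg_mul_sq_norm_add (V := En n) (b := (1 / 8 : ℂ))
    (by norm_num) 0 0).norm
  refine Integrable.mono' (h.const_mul (m.factorial * Real.exp 4)) (by fun_prop) ?_
  refine Filter.Eventually.of_forall fun y => ?_
  have hy := norm_nonneg y
  rw [Real.norm_of_nonneg (by positivity), Complex.norm_exp]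
  have e : (-(1 / 8 : ℂ) * (‖y‖ : ℂ) ^ 2 + 0 * ((inner ℝ (0 : En n) y : ℝ) : ℂ)).re = -‖y‖ ^ 2 / 8 := by
    have : (-(1 / 8 : ℂ) * (‖y‖ : ℂ) ^ 2 + 0 * ((inner ℝ (0 : En n) y : ℝ) : ℂ))
      = ((-‖y‖ ^ 2 / 8 : ℝ) : ℂ) := by push_cast; ring
    rw [this, Complex.ofReal_re]
  rw [e]
  have h1 := Real.pow_div_factorial_le_exp (‖y‖ + 2) (by positivity) m
  rw [div_le_iff₀ (by positivity)] at h1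
  calc _ ≤ (Real.exp (‖y‖ + 2) * m.factorial) * Real.exp (-‖y‖ ^ 2 / 4) := by gcongr
    _ = m.factorial * Real.exp (‖y‖ + 2 + -‖y‖ ^ 2 / 4) := by rw [Real.exp_add (‖y‖ + 2)]; ring
    _ ≤ m.factorial * Real.exp (4 + -‖y‖ ^ 2 / 8) := by
      refine mul_le_mul_of_nonneg_left (Real.exp_le_exp.2 ?_) (by positivity)
      nlinarith [sq_nonneg (‖y‖ - 4)]
    _ = _ := by rw [Real.exp_add]; ring

lemma scale {n : ℕ} {t : ℝ} (ht : 0 < t) (f : En n → ℝ) :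
    ∫ x, f x * Gfun n x t = ∫ y, f (√t • y) * Real.exp (-‖y‖ ^ 2 / 4) := by
  have hτ : 0 < √t := Real.sqrt_pos.2 ht
  have h := Measure.integral_comp_smul_of_nonneg (volume : Measure (En n)) (fun x => f x * Gfun n x t) √t
    (hR := hτ.le)
  rw [finrank_euclideanSpace_fin, smul_eq_mul] at h
  have e : ∀ y : En n, f (√t • y) * Gfun n (√t • y) t =
      (√t ^ n)⁻¹ * (f (√t • y) * Real.exp (-‖y‖ ^ 2 / 4)) := by
    intro y
    unfold Gfun
    have h1 : t ^ (-(n : ℝ) / 2) = (√t ^ n)⁻¹ := by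
      rw [Real.sqrt_eq_rpow, ← Real.rpow_natCast, ← Real.rpow_mul ht.le, ← Real.rpow_neg ht.le]
      congr 1; ring
    have h2 : -‖√t • y‖ ^ 2 / (4 * t) = -‖y‖ ^ 2 / 4 := by
      rw [norm_smul, Real.norm_of_nonneg hτ.le, mul_pow, Real.sq_sqrt ht.le]; field_simp
    rw [h1, h2]; ring
  simp only [e] at h
  rw [integral_const_mul] at h
  exact (mul_left_cancel₀ (by positivity) h).symm

lemma cpt_slice {F : Type*} [NormedAddCommGroup F] {n : ℕ} {V : En n × ℝ → F} (hc : HasCompactSupport V) (t : ℝ) :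
    HasCompactSupport (fun x => ‖V (x, t)‖ ^ 2) := by
  have : IsCompact (Prod.fst '' tsupport V) := hc.isCompact.image continuous_fst
  refine HasCompactSupport.intro this fun x hx => ?_
  have : V (x, t) = 0 := by
    by_contra h
    exact hx ⟨(x, t), subset_tsupport _ h, rfl⟩
  simp [this]

lemma G_cont (n : ℕ) (t : ℝ) : Continuous (fun x : En n => Gfun n x t) := by
  unfold Gfun; fun_prop

lemma G_nonneg (n : ℕ) {t : ℝ} (ht : 0 < t) (x : En n) : 0 ≤ Gfun n x t := by
  unfold Gfun; positivity

lemma slice_int {F : Type*} [NormedAddCommGroup F] {n : ℕ} {V : En n × ℝ → F} (hV : Continuous V) (hc : HasCompactSupport V) (t : ℝ)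
    {f : En n → ℝ} (hf : Continuous f) : Integrable (fun x => f x * ‖V (x, t)‖ ^ 2) := by
  refine Continuous.integrable_of_hasCompactSupport (by fun_prop) ?_
  exact (cpt_slice hc t).mul_left

lemma general {n : ℕ} (hn : 0 < n) {V : En n × ℝ → F} (hV : ContDiff ℝ (⊤ : ℕ∞) V) (hc : HasCompactSupport V)
    {b β CS A B : ℝ} (hb : 0 < b) (hb1 : b ≤ 1) (hβ : 1 < β) (hA : 0 ≤ A) (hB : 0 ≤ B)
    {S Θ κ : ℝ → ℝ} {W : En n → ℝ → ℝ}
    (hS : ContinuousOn S (Ioo 0 b)) (hS1 : ∀ t ∈ Ioo 0 b, t ^ (-β) ≤ S t)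
    (hS2 : ∀ t ∈ Ioo 0 b, S t ≤ CS * t ^ (-β))
    (hΘm : Measurable Θ) (hΘ0 : ∀ t ∈ Ioo 0 b, 0 ≤ Θ t)
    (hΘ : ∀ ε : ℝ, 0 < ε → ∃ C : ℝ, 0 ≤ C ∧ ∀ t ∈ Ioo 0 b, Θ t ≤ C * t ^ (-(1 / 2) - ε : ℝ))
    (hκ : Continuous κ) (hκ0 : ∀ t ∈ Ioo 0 b, 0 ≤ κ t)
    (hWc : ∀ t ∈ Ioo 0 b, Continuous (fun x => W x t)) (hW : ∀ t ∈ Ioo 0 b, ∀ x, ‖x‖ / t ≤ W x t)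
    (hpt : ∀ t ∈ Ioo 0 b, ∀ x, S t * W x t * Gfun n x t ≤ A * κ t + B * (S t * Θ t * Gfun n x t)) :
    (∫ t in Ico (0 : ℝ) b, ∫ x, S t * W x t * ‖V (x, t)‖ ^ 2 * Gfun n x t) ≤
      A * (∫ t in Ico (0 : ℝ) b, ∫ x, κ t * ‖V (x, t)‖ ^ 2) +
      B * ∫ t in Ico (0 : ℝ) b, ∫ x, S t * Θ t * ‖V (x, t)‖ ^ 2 * Gfun n x t := by
  simp only [← setIntegral_congr_set (μ := volume) (Ioo_ae_eq_Ico (a := (0 : ℝ)) (b := b))]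
  have hS0 : ∀ t ∈ Ioo 0 b, 0 ≤ S t := fun t ht => (Real.rpow_nonneg ht.1.le _).trans (hS1 t ht)
  have hR1 : 0 ≤ ∫ t in Ioo (0 : ℝ) b, ∫ x, κ t * ‖V (x, t)‖ ^ 2 :=
    setIntegral_nonneg measurableSet_Ioo fun t ht => integral_nonneg fun x =>
      mul_nonneg (hκ0 t ht) (by positivity)
  have hR2 : 0 ≤ ∫ t in Ioo (0 : ℝ) b, ∫ x, S t * Θ t * ‖V (x, t)‖ ^ 2 * Gfun n x t :=
    setIntegral_nonneg measurableSet_Ioo fun t ht => integral_nonneg fun x =>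
      mul_nonneg (mul_nonneg (mul_nonneg (hS0 t ht) (hΘ0 t ht)) (by positivity)) (G_nonneg n ht.1 x)
  by_cases hI : IntegrableOn (fun t => ∫ x, S t * W x t * ‖V (x, t)‖ ^ 2 * Gfun n x t) (Ioo 0 b)
  swap
  · rw [integral_undef hI]; positivity
  have hVc := hV.continuous
  -- a.e. integrability along parabolas
  have hae : ∀ᵐ y : En n, IntegrableOn (fun t => t ^ (-(β + 1 / 2)) * ‖V (√t • y, t)‖ ^ 2) (Ioo 0 b) := by
    set H : ℝ → En n → ℝ := fun t y => t ^ (-(β + 1 / 2)) * ‖V (√t • y, t)‖ ^ 2 * (‖y‖ * Real.exp (-‖y‖ ^ 2 / 4))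
      with hH
    have hHm : Measurable (Function.uncurry H) := by
      have h1 : Continuous (fun p : ℝ × En n => ‖V (√p.1 • p.2, p.1)‖ ^ 2) := by fun_prop
      have h2 : Measurable (fun p : ℝ × En n => p.1 ^ (-(β + 1 / 2))) := by fun_prop
      have h3 : Continuous (fun p : ℝ × En n => ‖p.2‖ * Real.exp (-‖p.2‖ ^ 2 / 4)) := by fun_prop
      exact (h2.mul h1.measurable).mul h3.measurable
    have hle : ∀ t ∈ Ioo 0 b, ∫⁻ y, ENNReal.ofReal (H t y) ≤
        ENNReal.ofReal (∫ x, S t * W x t * ‖V (x, t)‖ ^ 2 * Gfun n x t) := by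
      intro t ht
      have ht0 := ht.1
      have hτ : 0 < √t := Real.sqrt_pos.2 ht0
      have hHi : Integrable (H t) := by
        have : Continuous (fun p : En n × ℝ => V (√t • p.1, p.2)) := by fun_prop
        have hcc : HasCompactSupport (fun p : En n × ℝ => V (√t • p.1, p.2)) := by
          let e : (En n × ℝ) ≃ₜ (En n × ℝ) := (Homeomorph.smulOfNeZero √t hτ.ne').prodCongr (Homeomorph.refl ℝ)
          exact hc.comp_homeomorph e
        have := slice_int this hcc t (f := fun y => t ^ (-(β + 1 / 2)) * (‖y‖ * Real.exp (-‖y‖ ^ 2 / 4))) (by fun_prop)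
        refine this.congr (Filter.Eventually.of_forall fun y => ?_)
        simp only [hH]; ring
      rw [← ofReal_integral_eq_lintegral_ofReal hHi (Filter.Eventually.of_forall fun y => by
        simp only [hH, Pi.zero_apply]; positivity)]
      apply ENNReal.ofReal_le_ofReal
      have e1 : ∫ y, H t y = ∫ x, (t ^ (-β) * (‖x‖ / t) * ‖V (x, t)‖ ^ 2) * Gfun n x t := by
        rw [scale ht0]
        refine integral_congr_ae (Filter.Eventually.of_forall fun y => ?_)
        simp only [hH]
        have : t ^ (-(β + 1 / 2)) = t ^ (-β) * (√t / t) := by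
          rw [neg_add, Real.rpow_add ht0, Real.sqrt_eq_rpow]
          congr 1
          rw [eq_div_iff ht0.ne']
          nth_rw 2 [← Real.rpow_one t]
          rw [← Real.rpow_add ht0]; norm_num
        rw [this, norm_smul, Real.norm_of_nonneg hτ.le]; ring
      rw [e1]
      have hGc := G_cont n t
      have hWc' := hWc t ht
      apply integral_mono
      · refine (slice_int hVc hc t (f := fun x => t ^ (-β) * (‖x‖ / t) * Gfun n x t) (by fun_prop)).congr
          (Filter.Eventually.of_forall fun y => ?_)
        simp only; ring
      · refine (slice_int hVc hc t (f := fun x => S t * W x t * Gfun n x t) (by fun_prop)).congr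
          (Filter.Eventually.of_forall fun y => ?_)
        simp only; ring
      · intro x
        have hg := G_nonneg n ht0 x
        have h1 := hS1 t ht
        have h2 := hW t ht x
        have h3 := hS0 t ht
        simp only
        gcongr
    have hfin : ∫⁻ t in Ioo 0 b, ∫⁻ y, ENNReal.ofReal (H t y) ≠ ⊤ := by
      refine ne_top_of_le_ne_top ?_ (setLIntegral_mono' measurableSet_Ioo hle)
      exact (hI.lintegral_lt_top).ne
    rw [lintegral_lintegral_swap (hHm.ennreal_ofReal.aemeasurable)] at hfin
    have hm2 : Measurable (fun y => ∫⁻ t in Ioo 0 b, ENNReal.ofReal (H t y)) := by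
      apply Measurable.lintegral_prod_right
      exact (hHm.comp measurable_swap).ennreal_ofReal
    have hne : ∀ᵐ y : En n, y ≠ 0 := by
      have : Nonempty (Fin n) := ⟨⟨0, hn⟩⟩
      have : (volume : Measure (En n)) {0} = 0 := measure_singleton 0
      exact compl_mem_ae_iff.2 this
    filter_upwards [ae_lt_top hm2 hfin, hne] with y hy hy0
    have hHy : IntegrableOn (fun t => H t y) (Ioo 0 b) := by
      refine ⟨(hHm.comp (measurable_id.prodMk measurable_const)).aestronglyMeasurable, ?_⟩
      rw [hasFiniteIntegral_iff_ofReal]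
      · exact hy
      · filter_upwards [ae_restrict_mem measurableSet_Ioo] with t ht
        have := ht.1
        simp only [hH, Pi.zero_apply]; positivity
    have hp : 0 < ‖y‖ * Real.exp (-‖y‖ ^ 2 / 4) := mul_pos (norm_pos_iff.2 hy0) (Real.exp_pos _)
    refine (hHy.mul_const (‖y‖ * Real.exp (-‖y‖ ^ 2 / 4))⁻¹).congr (Filter.Eventually.of_forall fun t => ?_)
    simp only [hH]
    rw [mul_assoc _ (‖y‖ * _), mul_inv_cancel₀ hp.ne', mul_one]
  -- integrability of the right-hand side
  have hI2 : IntegrableOn (fun t => ∫ x, S t * Θ t * ‖V (x, t)‖ ^ 2 * Gfun n x t) (Ioo 0 b) := by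
    set γ := β + 1 / 2 with hγ
    set m := ⌊γ⌋₊ with hm
    have hm1 : 1 ≤ m := (Nat.one_le_floor_iff γ).2 (by linarith)
    have hmγ : (m : ℝ) ≤ γ := Nat.floor_le (by linarith)
    have hmγ' : γ < m + 1 := Nat.lt_floor_add_one γ
    obtain ⟨C, hC0, hC⟩ := decay hV hc hb m hm1 hmγ hae
    obtain ⟨CΘ, hCΘ0, hCΘ⟩ := hΘ ((m + 1 - γ) / 2) (by linarith)
    set K := ∫ y : En n, C ^ 2 * ((‖y‖ + 2) ^ (2 * m) * Real.exp (-‖y‖ ^ 2 / 4)) with hK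
    have hK0 : 0 ≤ K := integral_nonneg fun y => by positivity
    have hAle : ∀ t ∈ Ioo 0 b, ∫ x, ‖V (x, t)‖ ^ 2 * Gfun n x t ≤ t ^ m * K := by
      intro t ht
      have ht0 := ht.1
      rw [scale ht0, hK, ← integral_const_mul]
      refine integral_mono_of_nonneg (Filter.Eventually.of_forall fun y => ?_)
        (((poly_gauss n (2 * m)).const_mul _).const_mul _) ?_
      · simp only [Pi.zero_apply]; positivity
      · filter_upwards [hC] with y hy
        have h1 := hy t ht0 (ht.2.le.trans hb1)
        calc ‖V (√t • y, t)‖ ^ 2 * Real.exp (-‖y‖ ^ 2 / 4)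
            ≤ (C * (‖y‖ + 2) ^ m * √t ^ m) ^ 2 * Real.exp (-‖y‖ ^ 2 / 4) := by gcongr
          _ = _ := by
            rw [mul_pow, mul_pow, ← pow_mul √t, mul_comm m 2, pow_mul √t, Real.sq_sqrt ht0.le, ← pow_mul, mul_comm m 2]
            ring
    have hform : ∀ t, ∫ x, S t * Θ t * ‖V (x, t)‖ ^ 2 * Gfun n x t =
        S t * Θ t * ∫ x, ‖V (x, t)‖ ^ 2 * Gfun n x t := by
      intro t
      rw [← integral_const_mul]
      congr 1; ext x; ring
    simp only [hform]
    have hdom : IntegrableOn (fun t : ℝ => (CS * CΘ * K) * t ^ ((m - γ - 1) / 2)) (Ioo 0 b) := by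
      apply Integrable.const_mul
      exact (intervalIntegral.integrableOn_Ioo_rpow_iff hb).2 (by linarith)
    have hmeas : Measurable (fun t => ∫ x, ‖V (x, t)‖ ^ 2 * Gfun n x t) := by
      apply StronglyMeasurable.measurable
      apply StronglyMeasurable.integral_prod_right
      have h1 : Continuous (fun p : ℝ × En n => ‖V (p.2, p.1)‖ ^ 2) := by fun_prop
      have h2 : Measurable (fun p : ℝ × En n => Gfun n p.2 p.1) := by unfold Gfun; fun_prop
      exact (h1.measurable.mul h2).stronglyMeasurable
    refine Integrable.mono' hdom ?_ ?_
    · exact ((hS.aestronglyMeasurable measurableSet_Ioo).mul hΘm.aestronglyMeasurable).mul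
        hmeas.aestronglyMeasurable
    · filter_upwards [ae_restrict_mem measurableSet_Ioo] with t ht
      have ht0 := ht.1
      have hA0 : 0 ≤ ∫ x, ‖V (x, t)‖ ^ 2 * Gfun n x t := integral_nonneg fun x =>
        mul_nonneg (by positivity) (G_nonneg n ht0 x)
      have hs0 := hS0 t ht
      have hθ0 := hΘ0 t ht
      rw [Real.norm_of_nonneg (by positivity)]
      calc _ ≤ (CS * t ^ (-β)) * (CΘ * t ^ (-(1 / 2) - (m + 1 - γ) / 2)) * (t ^ m * K) := by
            have := (hs0.trans (hS2 t ht))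
            have a1 := hS2 t ht
            have a2 := hCΘ t ht
            have a3 := hAle t ht
            gcongr
        _ = (CS * CΘ * K) * (t ^ (-β) * t ^ (-(1 / 2) - (m + 1 - γ) / 2) * t ^ (m : ℝ)) := by
            rw [Real.rpow_natCast]; ring
        _ = _ := by
            rw [← Real.rpow_add ht0, ← Real.rpow_add ht0]
            congr 2
            rw [hγ]; ring
  have hI1 : IntegrableOn (fun t => ∫ x, κ t * ‖V (x, t)‖ ^ 2) (Ioo 0 b) := by
    have h1 : Integrable (fun p : ℝ × En n => κ p.1 * ‖V (p.2, p.1)‖ ^ 2) := by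
      refine Continuous.integrable_of_hasCompactSupport (by fun_prop) ?_
      have h2 : HasCompactSupport (fun p : ℝ × En n => V (p.2, p.1)) :=
        hc.comp_homeomorph (Homeomorph.prodComm ℝ (En n))
      have h3 : HasCompactSupport (fun p : ℝ × En n => ‖V (p.2, p.1)‖ ^ 2) :=
        h2.comp_left (g := fun v => ‖v‖ ^ 2) (by simp)
      exact h3.mul_left
    exact h1.integral_prod_left.integrableOn
  rw [← integral_const_mul, ← integral_const_mul, ← integral_add (hI1.const_mul A) (hI2.const_mul B)]
  refine setIntegral_mono_on hI ((hI1.const_mul A).add (hI2.const_mul B)) measurableSet_Ioo fun t ht => ?_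
  have hGc := G_cont n t
  have hWc' := hWc t ht
  have i1 : Integrable (fun x => κ t * ‖V (x, t)‖ ^ 2) := slice_int hVc hc t continuous_const
  have i2 : Integrable (fun x => S t * Θ t * ‖V (x, t)‖ ^ 2 * Gfun n x t) := by
    refine (slice_int hVc hc t (f := fun x => S t * Θ t * Gfun n x t) (by fun_prop)).congr
          (Filter.Eventually.of_forall fun y => ?_)
    simp only; ring
  have i3 : Integrable (fun x => S t * W x t * ‖V (x, t)‖ ^ 2 * Gfun n x t) := by
    refine (slice_int hVc hc t (f := fun x => S t * W x t * Gfun n x t) (by fun_prop)).congr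
          (Filter.Eventually.of_forall fun y => ?_)
    simp only; ring
  rw [← integral_const_mul, ← integral_const_mul, ← integral_add (i1.const_mul A) (i2.const_mul B)]
  refine integral_mono i3 ((i1.const_mul A).add (i2.const_mul B)) fun x => ?_
  have := mul_le_mul_of_nonneg_right (hpt t ht x) (sq_nonneg ‖V (x, t)‖)
  simp only
  linarith

end general2

section final
variable {F : Type*} [NormedAddCommGroup F] [NormedSpace ℝ F]

lemma general_sigma {n : ℕ} (hn : 0 < n) {V : En n × ℝ → F} (hV : ContDiff ℝ (⊤ : ℕ∞) V)
    (hc : HasCompactSupport V)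
    {l β A B : ℝ} (hl : 1 ≤ l) (hβ : 1 < β) (hA : 0 ≤ A) (hB : 0 ≤ B)
    {κ : ℝ → ℝ} {W : En n → ℝ → ℝ}
    (hκ : Continuous κ) (hκ0 : ∀ t ∈ Ioo 0 (1 / (2 * l)), 0 ≤ κ t)
    (hWc : ∀ t ∈ Ioo 0 (1 / (2 * l)), Continuous (fun x => W x t))
    (hW : ∀ t ∈ Ioo 0 (1 / (2 * l)), ∀ x, ‖x‖ / t ≤ W x t)
    (hpt : ∀ t ∈ Ioo 0 (1 / (2 * l)), ∀ x, sigmaFun l t ^ (-β) * W x t * Gfun n x t ≤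
      A * κ t + B * (sigmaFun l t ^ (-β) * (thetaFun (l * t) / t) * Gfun n x t)) :
    (∫ t in Ico (0 : ℝ) (1 / (2 * l)), ∫ x, sigmaFun l t ^ (-β) * W x t * ‖V (x, t)‖ ^ 2 * Gfun n x t) ≤
      A * (∫ t in Ico (0 : ℝ) (1 / (2 * l)), ∫ x, κ t * ‖V (x, t)‖ ^ 2) +
      B * ∫ t in Ico (0 : ℝ) (1 / (2 * l)), ∫ x,
        sigmaFun l t ^ (-β) * (thetaFun (l * t) / t) * ‖V (x, t)‖ ^ 2 * Gfun n x t := by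
  obtain ⟨N₀, hN₀, hσ⟩ := sigma_bound
  have hl0 : 0 < l := by linarith
  have hpos : ∀ t ∈ Ioo 0 (1 / (2 * l)), 0 < sigmaFun l t := fun t ht =>
    lt_of_lt_of_le (mul_pos ht.1 (Real.exp_pos _)) (hσ l t hl0 ht.1 ht.2).1
  have hlt : ∀ t ∈ Ioo 0 (1 / (2 * l)), 0 < l * t ∧ l * t ≤ 1 := by
    intro t ht
    have h1 := ht.2
    rw [lt_div_iff₀ (by positivity)] at h1
    have := mul_pos hl0 ht.1
    exact ⟨this, by nlinarith⟩
  refine general hn hV hc (CS := Real.exp (N₀ * β)) (Θ := fun t => thetaFun (l * t) / t)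
    (S := fun t => sigmaFun l t ^ (-β)) (by positivity) ?_ hβ hA hB
    ?_ ?_ ?_ ?_ ?_ ?_ hκ hκ0 hWc hW hpt
  · rw [div_le_one (by positivity)]; linarith
  · exact (sigma_cont hl0).rpow_const fun t ht => Or.inl (hpos t ht).ne'
  · intro t ht
    exact Real.rpow_le_rpow_of_nonpos (hpos t ht) (hσ l t hl0 ht.1 ht.2).2 (by linarith)
  · intro t ht
    have := Real.rpow_le_rpow_of_nonpos (z := -β) (mul_pos ht.1 (Real.exp_pos _))
      (hσ l t hl0 ht.1 ht.2).1 (by linarith)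
    refine this.trans_eq ?_
    rw [Real.mul_rpow ht.1.le (Real.exp_pos _).le, ← Real.exp_mul, mul_comm]
    congr 2; ring
  · exact (theta_meas.comp (measurable_const_mul l)).div measurable_id
  · intro t ht
    exact div_nonneg (theta_nonneg (hlt t ht).1 (hlt t ht).2) ht.1.le
  · intro ε hε
    obtain ⟨C, hC, h⟩ := theta_bound hε
    refine ⟨C * l ^ (1 / 2 - ε), by positivity, fun t ht => ?_⟩
    have ht0 := ht.1
    rw [div_le_iff₀ ht0]
    refine (h _ (hlt t ht).1 (hlt t ht).2).trans_eq ?_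
    rw [Real.mul_rpow hl0.le ht0.le, mul_assoc (C * _)]
    nth_rw 3 [← Real.rpow_one t]
    rw [← Real.rpow_add ht0, mul_assoc]
    congr 3; ring

end final

lemma grad_smooth {n : ℕ} {w : En n → ℝ → ℝ} (hw : ContDiff ℝ (⊤ : ℕ∞) (Function.uncurry w)) :
    ContDiff ℝ (⊤ : ℕ∞) (fun p : En n × ℝ => fderiv ℝ (fun y => w y p.2) p.1) := by
  refine ContDiff.fderiv (m := (⊤ : ℕ∞)) (f := fun (p : En n × ℝ) y => w y p.2) ?_ contDiff_fst (by simp)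
  exact hw.comp (contDiff_snd.prodMk (contDiff_snd.comp contDiff_fst))

lemma grad_cpt {n : ℕ} {w : En n → ℝ → ℝ} (hc : HasCompactSupport (Function.uncurry w)) :
    HasCompactSupport (fun p : En n × ℝ => fderiv ℝ (fun y => w y p.2) p.1) := by
  refine HasCompactSupport.intro hc.isCompact fun p hp => ?_
  have h1 : Function.uncurry w =ᶠ[nhds p] 0 := notMem_tsupport_iff_eventuallyEq.1 hp
  have h2 : Filter.Tendsto (fun y : En n => (y, p.2)) (nhds p.1) (nhds p) :=
    (Continuous.prodMk_left p.2).tendsto p.1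
  have h3 : (fun y => w y p.2) =ᶠ[nhds p.1] fun _ => 0 := h2.eventually h1
  rw [h3.fderiv_eq]; simp

lemma grad_norm {n : ℕ} (f : En n → ℝ) (x : En n) : ‖gradient f x‖ = ‖fderiv ℝ f x‖ := by
  simp [gradient]

/-- Lemma `logi` of the paper: for `α > 1`, `δ ∈ (0,1)` and
`λ = α/δ²` there is a constant `N > 0` depending only on `n` such that for every
`w ∈ C_0^∞(ℝⁿ × [0, 1/(2λ)))` the two weighted inequalities below hold. -/
theorem weighted_gaussian_inequalities (n : ℕ) :
    ∃ N : ℝ, 0 < N ∧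
      ∀ α δ : ℝ, 1 < α → 0 < δ → δ < 1 →
        ∀ l : ℝ, l = α / δ ^ 2 →
          ∀ w : En n → ℝ → ℝ,
            ContDiff ℝ (⊤ : ℕ∞) (Function.uncurry w) →
            HasCompactSupport (Function.uncurry w) →
            Function.support (Function.uncurry w) ⊆
              (Set.univ : Set (En n)) ×ˢ Set.Iio (1 / (2 * l)) →
            ((∫ t in Set.Ico (0 : ℝ) (1 / (2 * l)), ∫ x : En n,
                sigmaFun l t ^ (-(2 * α)) * (‖x‖ / t + ‖x‖ ^ 3 / (α * t ^ 2)) *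
                  w x t ^ 2 * Gfun n x t) ≤
              N * Real.exp (2 * α * N) * l ^ (2 * α + N) *
                  (∫ t in Set.Ico (0 : ℝ) (1 / (2 * l)), ∫ x : En n, w x t ^ 2)
                + N * δ * ∫ t in Set.Ico (0 : ℝ) (1 / (2 * l)), ∫ x : En n,
                    sigmaFun l t ^ (-(2 * α)) * (thetaFun (l * t) / t) *
                      w x t ^ 2 * Gfun n x t) ∧
            ((∫ t in Set.Ico (0 : ℝ) (1 / (2 * l)), ∫ x : En n,
                sigmaFun l t ^ (-(2 * α) + 1) *
                  (‖x‖ / t + ‖x‖ ^ 3 / (α * t ^ 2) + ‖x‖ ^ 2 / (δ * t)) *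
                  ‖gradient (fun y => w y t) x‖ ^ 2 * Gfun n x t) ≤
              N * Real.exp (2 * α * N) * l ^ (2 * α + N) *
                  (∫ t in Set.Ico (0 : ℝ) (1 / (2 * l)), ∫ x : En n,
                    t * ‖gradient (fun y => w y t) x‖ ^ 2)
                + N * δ * ∫ t in Set.Ico (0 : ℝ) (1 / (2 * l)), ∫ x : En n,
                    sigmaFun l t ^ (-(2 * α) + 1) * (thetaFun (l * t) / t) *
                      ‖gradient (fun y => w y t) x‖ ^ 2 * Gfun n x t) := by
  obtain ⟨N, hN, hpt⟩ := pointwise n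
  refine ⟨N, hN, ?_⟩
  intro α δ hα hδ hδ1 l hl w hw hc _
  have hl0 : 0 < l := by rw [hl]; positivity
  have hl1 : 1 ≤ l := by
    rw [hl, le_div_iff₀ (by positivity)]; nlinarith
  have hA : 0 ≤ N * Real.exp (2 * α * N) * l ^ (2 * α + N) := by positivity
  have hB : 0 ≤ N * δ := by positivity
  obtain ⟨N₀, hN₀, hσ⟩ := sigma_bound
  have hpos : ∀ t ∈ Ioo 0 (1 / (2 * l)), 0 < sigmaFun l t := fun t ht =>
    lt_of_lt_of_le (mul_pos ht.1 (Real.exp_pos _)) (hσ l t hl0 ht.1 ht.2).1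
  rcases Nat.eq_zero_or_pos n with hn | hn
  · subst hn
    have hx : ∀ x : En 0, ‖x‖ = 0 := fun x => by rw [Subsingleton.elim x 0, norm_zero]
    have hθ : ∀ t ∈ Ioo 0 (1 / (2 * l)), 0 ≤ thetaFun (l * t) / t := by
      intro t ht
      have h1 := ht.2
      rw [lt_div_iff₀ (by positivity)] at h1
      exact div_nonneg (theta_nonneg (mul_pos hl0 ht.1) (by nlinarith)) ht.1.le
    simp only [hx, ← setIntegral_congr_set (μ := volume) (Ioo_ae_eq_Ico (a := (0 : ℝ)) (b := 1 / (2 * l)))]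
    constructor
    · have r1 : 0 ≤ ∫ t in Ioo (0 : ℝ) (1 / (2 * l)), ∫ x : En 0, w x t ^ 2 :=
        setIntegral_nonneg measurableSet_Ioo fun t ht => integral_nonneg fun x => sq_nonneg _
      have r2 : 0 ≤ ∫ t in Ioo (0 : ℝ) (1 / (2 * l)), ∫ x : En 0,
          sigmaFun l t ^ (-(2 * α)) * (thetaFun (l * t) / t) * w x t ^ 2 * Gfun 0 x t :=
        setIntegral_nonneg measurableSet_Ioo fun t ht => integral_nonneg fun x =>
          mul_nonneg (mul_nonneg (mul_nonneg (Real.rpow_nonneg (hpos t ht).le _) (hθ t ht)) (sq_nonneg _))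
            (G_nonneg 0 ht.1 x)
      have := add_nonneg (mul_nonneg hA r1) (mul_nonneg hB r2)
      simpa using this
    · simp
  constructor
  · have := general_sigma hn (V := Function.uncurry w) hw hc (l := l) (β := 2 * α)
      (κ := fun _ => 1) (W := fun x t => ‖x‖ / t + ‖x‖ ^ 3 / (α * t ^ 2)) hl1 (by linarith) hA hB
      continuous_const (fun _ _ => zero_le_one) (fun t _ => by fun_prop)
      (fun t ht x => by
        have := ht.1
        exact le_add_of_nonneg_right (by positivity))
      (fun t ht x => by
        have h1 := hpt α δ l t hα hδ hδ1 hl ht.1 ht.2 x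
        have ht0 := ht.1
        have hg := G_nonneg n ht0 x
        have hs := hpos t ht
        rw [mul_one]
        refine le_trans ?_ h1
        refine mul_le_mul_of_nonneg_right (mul_le_mul_of_nonneg_left ?_ (by positivity)) hg
        exact le_add_of_nonneg_right (by positivity))
    simpa only [Function.uncurry_apply_pair, Real.norm_eq_abs, sq_abs, one_mul] using this
  · have := general_sigma hn (grad_smooth hw) (grad_cpt hc) (l := l) (β := 2 * α - 1)
      (κ := fun t => t)
      (W := fun x t => ‖x‖ / t + ‖x‖ ^ 3 / (α * t ^ 2) + ‖x‖ ^ 2 / (δ * t)) hl1 (by linarith) hA hB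
      continuous_id (fun t ht => ht.1.le) (fun t _ => by fun_prop)
      (fun t ht x => by
        have := ht.1
        rw [add_assoc]
        exact le_add_of_nonneg_right (by positivity))
      (fun t ht x => by
        have h1 := hpt α δ l t hα hδ hδ1 hl ht.1 ht.2 x
        have hs := hpos t ht
        have hst := (hσ l t hl0 ht.1 ht.2).2
        have e : sigmaFun l t ^ (-(2 * α - 1)) = sigmaFun l t ^ (-(2 * α)) * sigmaFun l t := by
          rw [show -(2 * α - 1) = -(2 * α) + 1 by ring, Real.rpow_add hs, Real.rpow_one]
        rw [e]
        have h2 := mul_le_mul_of_nonneg_left h1 hs.le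
        have h3 := mul_le_mul_of_nonneg_left hst hA
        linarith)
    rw [show -(2 * α) + 1 = -(2 * α - 1) by ring]
    simp only [grad_norm]
    exact this
end
end
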